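/- For k ≥ 1, set s_ℓ = ∑_{n≥0} a_{ℓ,0}(n)/4ⁿ (a convergent sum for each ℓ ≥ 0). As n → ∞, the proportion of walks on the slit plane of length n that visit the point (k,0) tends to p_k = s_k · (∑_{ℓ=0}^{k−1} s_ℓ)/(∑_{ℓ=0}^{k−1} s_ℓ²), and p_k < 1; moreover the average number of visits to (k,0) of a uniformly random n-step walk on the slit plane tends to v_k = 4(√2−1) · s_k · ∑_{ℓ=0}^{k−1} s_ℓ. In particular p_1 = 2−√2, p_2 = (5/34)(19−11√2), v_1 = 4(3√2−4), and v_2 = 10(22√2−31). -/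

import Mathlib

open Filter

/-- The forbidden half-line `H = {(k,0) : k ≤ 0}`. -/
def slitH : Set (ℤ × ℤ) := {p : ℤ × ℤ | p.2 = 0 ∧ p.1 ≤ 0}

/-- The four steps of the ordinary square lattice. -/
def sqSteps : Set (ℤ × ℤ) := {(1,0), (-1,0), (0,1), (0,-1)}

/-- The four diagonal steps. -/
def diagSteps : Set (ℤ × ℤ) := {(1,1), (1,-1), (-1,1), (-1,-1)}

/-- `w : Fin (n+1) → ℤ × ℤ` is a walk on the slit plane with steps in `A`. -/
def IsSlitWalk (A : Set (ℤ × ℤ)) (n : ℕ) (w : Fin (n+1) → ℤ × ℤ) : Prop :=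
  w 0 = (0,0) ∧ (∀ m : Fin n, w m.succ - w m.castSucc ∈ A) ∧
    ∀ m : Fin (n+1), 1 ≤ (m : ℕ) → w m ∉ slitH

/-- `a_{i,j}(n)`: the number of walks on the slit plane of length `n` ending at `(i,j)`. -/
noncomputable def slitCount (A : Set (ℤ × ℤ)) (i j : ℤ) (n : ℕ) : ℕ :=
  Nat.card {w : Fin (n+1) → ℤ × ℤ // IsSlitWalk A n w ∧ w (Fin.last n) = (i, j)}
/-- `a(n)`: the total number of walks on the slit plane of length `n`. -/
noncomputable def slitTotal (A : Set (ℤ × ℤ)) (n : ℕ) : ℕ :=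
  Nat.card {w : Fin (n+1) → ℤ × ℤ // IsSlitWalk A n w}

/-- The number of walks on the slit plane of length `n` that visit the point `(k,0)`. -/
noncomputable def visitCount (k : ℤ) (n : ℕ) : ℕ :=
  Nat.card {w : Fin (n+1) → ℤ × ℤ // IsSlitWalk sqSteps n w ∧ ∃ m : Fin (n+1), w m = (k, 0)}

/-- The total number of visits to `(k,0)` of all walks on the slit plane of length `n`
(counted as pairs (walk, time of a visit)). -/
noncomputable def totalVisits (k : ℤ) (n : ℕ) : ℕ :=
  Nat.card {p : (Fin (n+1) → ℤ × ℤ) × Fin (n+1) //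
    IsSlitWalk sqSteps n p.1 ∧ p.1 p.2 = (k, 0)}

/-- `s_ℓ = ∑_{n≥0} a_{ℓ,0}(n)/4ⁿ`. -/
noncomputable def sSum (ℓ : ℕ) : ℝ := ∑' n : ℕ, (slitCount sqSteps ℓ 0 n : ℝ) / 4 ^ n

/-- `p_k`, the limit proportion of walks visiting `(k,0)`. -/
noncomputable def limVisitProb (k : ℕ) : ℝ :=
  sSum k * (∑ ℓ ∈ Finset.range k, sSum ℓ) / (∑ ℓ ∈ Finset.range k, (sSum ℓ) ^ 2)

/-- `v_k`, the limit of the average number of visits to `(k,0)`. -/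
noncomputable def limVisitNum (k : ℕ) : ℝ :=
  4 * (Real.sqrt 2 - 1) * sSum k * ∑ ℓ ∈ Finset.range k, sSum ℓ

/-!
Let `T` be the transition operator of the simple random walk killed on the slit. Every quantity
in question is a coefficient of a Green function `∑ tⁿ Tⁿ f`. Enlarging the slit by one point costs
a first-passage term and amounts to translating it by one step; iterating `k` times expresses the
walks that visit `(k,0)`, and all walks, through the generating functions `axisGF t ℓ` of the walks
ending at `(ℓ,0)`. A Wiener–Hopf factorisation shows that the power series `∑ (axisGF t ℓ) xˡ` is
the inverse square root of a quadratic in `x`, up to a constant factor. This gives the `s_ℓ`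
and shows that the generating function of `a(n)/4ⁿ` has a `(1-t)^(-3/4)` singularity at `t = 1`.
The generating functions of both visit counts are asymptotic to a multiple of it, and Karamata's
Tauberian theorem transfers this to coefficients.
-/

namespace SlitPlane

open scoped Topology

section Single

variable {ι : Type*} [DecidableEq ι]

theorem abs_single_one_le (i j : ι) : |(Pi.single i 1 : ι → ℝ) j| ≤ 1 := by
  rw [Pi.single_apply]
  split_ifs <;> simp

theorem single_one_nonneg (i j : ι) : 0 ≤ (Pi.single i 1 : ι → ℝ) j := by
  rw [Pi.single_apply]
  split_ifs <;> simp

end Single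

section KilledWalk

variable {G : Type*} [AddCommGroup G] {A : Finset G} {V : Set G}

/-- The transition operator of the random walk with uniform steps in `A`, killed when it steps
into `V`. Only arrivals are killed, so a walk may start inside `V`. -/
noncomputable def killedOp (A : Finset G) (V : Set G) : Module.End ℝ (G → ℝ) where
  toFun f p := (A.card : ℝ)⁻¹ * ∑ s ∈ A, Vᶜ.indicator f (p + s)
  map_add' f g := by
    funext p
    simp only [Set.indicator_add', Pi.add_apply, Finset.sum_add_distrib, mul_add]
  map_smul' c f := by
    funext p
    have h (q : G) : Vᶜ.indicator (c • f) q = c • Vᶜ.indicator f q :=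
      Set.indicator_const_smul_apply Vᶜ c f q
    simp only [h, Pi.smul_apply, ← Finset.smul_sum, mul_smul_comm, RingHom.id_apply]

theorem killedOp_apply (f : G → ℝ) (p : G) :
    killedOp A V f p = (A.card : ℝ)⁻¹ * ∑ s ∈ A, Vᶜ.indicator f (p + s) := rfl

theorem killedOp_pow_succ_apply (n : ℕ) (f : G → ℝ) :
    (killedOp A V ^ (n + 1)) f = killedOp A V ((killedOp A V ^ n) f) := by
  rw [pow_succ', Module.End.mul_apply]

theorem killedOp_pow_succ_apply' (n : ℕ) (f : G → ℝ) :
    (killedOp A V ^ (n + 1)) f = (killedOp A V ^ n) (killedOp A V f) := by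
  rw [pow_succ, Module.End.mul_apply]

theorem killedOp_nonneg {f : G → ℝ} (hf : ∀ p, 0 ≤ f p) (p : G) : 0 ≤ killedOp A V f p :=
  mul_nonneg (by positivity) <|
    Finset.sum_nonneg fun _ _ => Set.indicator_nonneg (fun q _ => hf q) _

theorem killedOp_pow_nonneg {f : G → ℝ} (hf : ∀ p, 0 ≤ f p) (n : ℕ) (p : G) :
    0 ≤ (killedOp A V ^ n) f p := by
  induction n generalizing p with
  | zero => exact hf p
  | succ n ih =>
    rw [killedOp_pow_succ_apply]
    exact killedOp_nonneg ih p

theorem abs_killedOp_le {f : G → ℝ} {K : ℝ} (hf : ∀ p, |f p| ≤ K) (p : G) :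
    |killedOp A V f p| ≤ K := by
  have hK : 0 ≤ K := (abs_nonneg _).trans (hf 0)
  have hterm (q : G) : |Vᶜ.indicator f q| ≤ K :=
    (norm_indicator_le_norm_self f q).trans (hf q)
  have hsum : |∑ s ∈ A, Vᶜ.indicator f (p + s)| ≤ A.card * K := by
    simpa using (Finset.abs_sum_le_sum_abs _ _).trans
      (Finset.sum_le_card_nsmul A _ K fun s _ => hterm (p + s))
  rw [killedOp_apply, abs_mul, abs_of_nonneg (by positivity)]
  calc (A.card : ℝ)⁻¹ * |∑ s ∈ A, Vᶜ.indicator f (p + s)|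
      ≤ (A.card : ℝ)⁻¹ * (A.card * K) := by gcongr
    _ = ((A.card : ℝ)⁻¹ * A.card) * K := by ring
    _ ≤ K := mul_le_of_le_one_left hK (inv_mul_le_one)

theorem abs_killedOp_pow_le {f : G → ℝ} {K : ℝ} (hf : ∀ p, |f p| ≤ K) (n : ℕ) (p : G) :
    |(killedOp A V ^ n) f p| ≤ K := by
  induction n generalizing p with
  | zero => exact hf p
  | succ n ih =>
    rw [killedOp_pow_succ_apply]
    exact abs_killedOp_le ih p

theorem killedOp_pow_mono {f g : G → ℝ} (h : ∀ p, f p ≤ g p) (n : ℕ) (p : G) :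
    (killedOp A V ^ n) f p ≤ (killedOp A V ^ n) g p := by
  have := killedOp_pow_nonneg (A := A) (V := V) (f := g - f) (fun q => sub_nonneg.2 (h q)) n p
  rwa [map_sub, Pi.sub_apply, sub_nonneg] at this

theorem antitone_killedOp_pow_one (p : G) :
    Antitone fun n => (killedOp A V ^ n) (1 : G → ℝ) p := by
  refine antitone_nat_of_succ_le fun n => ?_
  rw [killedOp_pow_succ_apply']
  exact killedOp_pow_mono (fun q => (le_abs_self _).trans (abs_killedOp_le (by simp) q)) n p

open Classical in
/-- The `n`-step walks from `p` with steps in `A` that do not visit `V` at any positive time. -/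
noncomputable def walks (A : Finset G) (V : Set G) : (n : ℕ) → G → Finset (Fin (n + 1) → G)
  | 0, p => {fun _ => p}
  | n + 1, p => {s ∈ A | p + s ∉ V}.biUnion fun s => (walks A V n (p + s)).image (Fin.cons p)

theorem mem_walks {n : ℕ} {p : G} {w : Fin (n + 1) → G} :
    w ∈ walks A V n p ↔ w 0 = p ∧ (∀ m : Fin n, w m.succ - w m.castSucc ∈ A) ∧
      ∀ m : Fin n, w m.succ ∉ V := by
  induction n generalizing p with
  | zero =>
    simp only [walks, Finset.mem_singleton, IsEmpty.forall_iff, and_true]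
    exact ⟨fun h => h ▸ rfl, fun h => funext fun i => by rw [Fin.fin_one_eq_zero i, h]⟩
  | succ n ih =>
    simp only [walks, Finset.mem_biUnion, Finset.mem_filter, Finset.mem_image, ih,
      Fin.forall_fin_succ (n := n), Fin.castSucc_zero, ← Fin.succ_castSucc]
    constructor
    · rintro ⟨s, ⟨hs, hV⟩, w, ⟨h0, hA, hV'⟩, rfl⟩
      simp only [Fin.cons_zero, Fin.cons_succ, h0, add_sub_cancel_left]
      exact ⟨trivial, ⟨hs, hA⟩, hV, hV'⟩
    · rintro ⟨h0, ⟨hs, hA⟩, hV, hV'⟩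
      refine ⟨w (Fin.succ 0) - w 0, ⟨hs, by simpa [← h0] using hV⟩, Fin.tail w,
        ⟨by simp [Fin.tail, ← h0], hA, hV'⟩, ?_⟩
      rw [← h0, Fin.cons_self_tail]

open Classical in
theorem sum_walks_succ (n : ℕ) (p : G) (F : (Fin (n + 2) → G) → ℝ) :
    ∑ w ∈ walks A V (n + 1) p, F w =
      ∑ s ∈ A with p + s ∉ V, ∑ w ∈ walks A V n (p + s), F (Fin.cons p w) := by
  rw [walks, Finset.sum_biUnion]
  · refine Finset.sum_congr rfl fun s _ => ?_
    exact Finset.sum_image (Fin.cons_right_injective (α := fun _ => G) p).injOn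
  · intro s _ s' _ hss
    simp only [Function.onFun, Finset.disjoint_left, Finset.mem_image]
    rintro _ ⟨w, hw, rfl⟩ ⟨w', hw', h⟩
    have hww := Fin.cons_right_injective (α := fun _ => G) p h
    rw [mem_walks] at hw hw'
    exact hss (add_left_cancel (hw.1.symm.trans (hww ▸ hw'.1)))

open Classical in
theorem card_pow_succ_mul_killedOp (n : ℕ) (f : G → ℝ) (p : G) :
    (A.card : ℝ) ^ (n + 1) * killedOp A V f p =
      ∑ s ∈ A with p + s ∉ V, (A.card : ℝ) ^ n * f (p + s) := by
  rw [← Finset.mul_sum, killedOp_apply, Finset.sum_filter]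
  simp only [Set.indicator_apply, Set.mem_compl_iff]
  rcases A.eq_empty_or_nonempty with rfl | hA
  · simp
  · have : (A.card : ℝ) ≠ 0 := by simpa using hA.ne_empty
    rw [pow_succ, mul_assoc, mul_inv_cancel_left₀ this]

theorem card_walks (n : ℕ) (p : G) :
    ((walks A V n p).card : ℝ) = (A.card : ℝ) ^ n * (killedOp A V ^ n) (1 : G → ℝ) p := by
  induction n generalizing p with
  | zero => simp [walks]
  | succ n ih =>
    have h := sum_walks_succ (A := A) (V := V) n p fun _ => 1
    simp only [Finset.sum_const, nsmul_one] at h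
    rw [h, killedOp_pow_succ_apply, card_pow_succ_mul_killedOp]
    simp only [ih]

theorem sum_walks_apply (m n : ℕ) (f : G → ℝ) (p : G) :
    ∑ w ∈ walks A V (n + m) p, f (w ⟨m, by omega⟩) =
      (A.card : ℝ) ^ (n + m) *
        (killedOp A V ^ m) (f * (killedOp A V ^ n) (1 : G → ℝ)) p := by
  induction m generalizing p with
  | zero =>
    have h : ∀ w ∈ walks A V n p, f (w 0) = f p := fun w hw => by rw [(mem_walks.1 hw).1]
    simp only [add_zero, Fin.mk_zero', pow_zero, Module.End.one_apply, Pi.mul_apply]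
    refine (Finset.sum_congr rfl h).trans ?_
    rw [Finset.sum_const, nsmul_eq_mul, card_walks]
    ring
  | succ m ih =>
    refine (sum_walks_succ (n + m) p fun w => f (w ⟨m + 1, by omega⟩)).trans ?_
    rw [killedOp_pow_succ_apply, ← add_assoc, card_pow_succ_mul_killedOp]
    refine Finset.sum_congr rfl fun s _ => ?_
    rw [← ih (p + s)]
    exact Finset.sum_congr rfl fun w _ => rfl

theorem card_walks_filter_eq [DecidableEq G] (m n : ℕ) (p q : G) :
    (({w ∈ walks A V (n + m) p | w ⟨m, by omega⟩ = q}.card : ℕ) : ℝ) =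
      (A.card : ℝ) ^ (n + m) *
        ((killedOp A V ^ m) (Pi.single q 1) p * (killedOp A V ^ n) (1 : G → ℝ) q) := by
  have hsingle : (Pi.single q 1 : G → ℝ) * (killedOp A V ^ n) (1 : G → ℝ) =
      (killedOp A V ^ n) (1 : G → ℝ) q • (Pi.single q 1 : G → ℝ) := by
    funext x
    rcases eq_or_ne x q with rfl | hx
    · simp
    · simp [hx]
  have h := sum_walks_apply (A := A) (V := V) m n (Pi.single q 1) p
  rw [hsingle, map_smul, Pi.smul_apply, smul_eq_mul] at h
  rw [mul_comm ((killedOp A V ^ m) (Pi.single q 1) p), ← h]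
  simp [Finset.sum_boole, Pi.single_apply]

/-- The Green function `∑ tⁿ Tⁿ f (p)` of the killed walk, for `T = killedOp A V`; at `f = δ_q` it
is the generating function of the walks from `p` to `q`. -/
noncomputable def green (A : Finset G) (V : Set G) (t : ℝ) (f : G → ℝ) (p : G) : ℝ :=
  ∑' n : ℕ, t ^ n * (killedOp A V ^ n) f p

variable {t K : ℝ} {f : G → ℝ}

theorem norm_green_term_le (ht : 0 ≤ t) (hf : ∀ p, |f p| ≤ K) (n : ℕ) (p : G) :
    ‖t ^ n * (killedOp A V ^ n) f p‖ ≤ t ^ n * K := by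
  rw [Real.norm_eq_abs, abs_mul, abs_of_nonneg (pow_nonneg ht n)]
  exact mul_le_mul_of_nonneg_left (abs_killedOp_pow_le hf n p) (pow_nonneg ht n)

theorem summable_green (ht : t ∈ Set.Ico 0 1) (hf : ∀ p, |f p| ≤ K) (p : G) :
    Summable fun n : ℕ => t ^ n * (killedOp A V ^ n) f p :=
  .of_norm_bounded ((summable_geometric_of_lt_one ht.1 ht.2).mul_right K)
    fun n => norm_green_term_le ht.1 hf n p

theorem abs_green_le (ht : t ∈ Set.Ico 0 1) (hf : ∀ p, |f p| ≤ K) (p : G) :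
    |green A V t f p| ≤ (1 - t)⁻¹ * K :=
  tsum_of_norm_bounded ((hasSum_geometric_of_lt_one ht.1 ht.2).mul_right K)
    fun n => norm_green_term_le ht.1 hf n p

theorem green_nonneg (ht : 0 ≤ t) (hf : ∀ p, 0 ≤ f p) (p : G) : 0 ≤ green A V t f p :=
  tsum_nonneg fun n => mul_nonneg (pow_nonneg ht n) (killedOp_pow_nonneg hf n p)

theorem green_sum {ι : Type*} {F : Finset ι} {f : ι → G → ℝ} (ht : t ∈ Set.Ico 0 1)
    (hf : ∀ i ∈ F, ∀ p, |f i p| ≤ K) (p : G) :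
    green A V t (∑ i ∈ F, f i) p = ∑ i ∈ F, green A V t (f i) p := by
  simp only [green]
  rw [← Summable.tsum_finsetSum fun i hi => summable_green ht (hf i hi) p]
  refine tsum_congr fun n => ?_
  rw [map_sum, Finset.sum_apply, Finset.mul_sum]

theorem green_smul (c t : ℝ) (f : G → ℝ) (p : G) :
    green A V t (c • f) p = c * green A V t f p := by
  simp only [green, map_smul, Pi.smul_apply, smul_eq_mul, ← tsum_mul_left, mul_left_comm c]

theorem killedOp_green (ht : t ∈ Set.Ico 0 1) (hf : ∀ p, |f p| ≤ K) (p : G) :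
    killedOp A V (green A V t f) p = ∑' n : ℕ, t ^ n * (killedOp A V ^ (n + 1)) f p := by
  have hind (q : G) : HasSum (fun n : ℕ => t ^ n * Vᶜ.indicator ((killedOp A V ^ n) f) q)
      (Vᶜ.indicator (green A V t f) q) := by
    by_cases hq : q ∈ V
    · simp [hq, hasSum_zero]
    · simpa [hq, green] using (summable_green ht hf q).hasSum
  rw [killedOp_apply,
    ← ((hasSum_sum fun s (_ : s ∈ A) => hind (p + s)).mul_left ((A.card : ℝ)⁻¹)).tsum_eq]
  refine tsum_congr fun n => ?_
  rw [killedOp_pow_succ_apply, killedOp_apply, ← Finset.mul_sum]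
  ring

theorem green_eq (ht : t ∈ Set.Ico 0 1) (hf : ∀ p, |f p| ≤ K) (p : G) :
    green A V t f p = f p + t * killedOp A V (green A V t f) p := by
  rw [killedOp_green ht hf, ← tsum_mul_left, green, (summable_green ht hf p).tsum_eq_zero_add]
  simp only [pow_zero, Module.End.one_apply, one_mul, pow_succ' t, mul_assoc]

theorem eq_zero_of_eq_mul_killedOp (ht : t ∈ Set.Ico 0 1) (hK : ∀ p, |f p| ≤ K)
    (hf : ∀ p, f p = t * killedOp A V f p) (p : G) : f p = 0 := by
  have hdecay (n : ℕ) (p : G) : |f p| ≤ t ^ n * K := by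
    induction n generalizing p with
    | zero => simpa using hK p
    | succ n ih =>
      rw [hf p, abs_mul, abs_of_nonneg ht.1, pow_succ', mul_assoc]
      exact mul_le_mul_of_nonneg_left (abs_killedOp_le ih p) ht.1
  have hlim : Tendsto (fun n : ℕ => t ^ n * K) atTop (𝓝 0) := by
    simpa using (tendsto_pow_atTop_nhds_zero_of_lt_one ht.1 ht.2).mul_const K
  exact abs_nonpos_iff.1 (ge_of_tendsto' hlim fun n => hdecay n p)

section Point

variable [DecidableEq G]

/-- `hit A q p` is the probability that a single step from `p` leads to `q`. -/
noncomputable def hit (A : Finset G) (q : G) : G → ℝ :=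
  killedOp A ∅ (Pi.single q 1)

theorem abs_hit_le (q p : G) : |hit A q p| ≤ 1 :=
  abs_killedOp_le (abs_single_one_le q) p

theorem hit_apply (q p : G) :
    hit A q p = (A.card : ℝ)⁻¹ * ∑ s ∈ A, (Pi.single q 1 : G → ℝ) (p + s) := by
  simp [hit, killedOp_apply]

theorem hit_add_right (q a p : G) : hit A (q + a) (p + a) = hit A q p := by
  simp only [hit_apply, Pi.single_apply, add_right_comm p a, add_left_inj]

theorem killedOp_single {q : G} (hq : q ∉ V) : killedOp A V (Pi.single q 1) = hit A q := by
  funext p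
  have hind : Vᶜ.indicator (Pi.single q 1 : G → ℝ) = Pi.single q 1 := by
    rw [Set.indicator_eq_self, Pi.support_single_of_ne one_ne_zero]
    simpa using hq
  rw [killedOp_apply, hit_apply, hind]

theorem killedOp_single_of_mem {q : G} (hq : q ∈ V) :
    killedOp A V (Pi.single q 1 : G → ℝ) = 0 := by
  funext p
  have hind : Vᶜ.indicator (Pi.single q 1 : G → ℝ) = 0 := by
    rw [Set.indicator_eq_zero', Pi.support_single_of_ne one_ne_zero]
    simpa using hq
  simp [killedOp_apply, hind]

theorem killedOp_eq_insert {a : G} (ha : a ∉ V) (f : G → ℝ) (p : G) :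
    killedOp A V f p = killedOp A (insert a V) f p + f a * hit A a p := by
  have hind (q : G) : Vᶜ.indicator f q =
      (insert a V)ᶜ.indicator f q + f a * (Pi.single a 1 : G → ℝ) q := by
    rcases eq_or_ne q a with rfl | hq
    · simp [ha]
    · by_cases hV : q ∈ V <;> simp [hq, hV]
  simp only [killedOp_apply, hit_apply, hind, Finset.sum_add_distrib, ← Finset.mul_sum]
  ring

theorem killedOp_pow_succ_single_of_mem {q : G} (hq : q ∈ V) (n : ℕ) :
    (killedOp A V ^ (n + 1)) (Pi.single q 1 : G → ℝ) = 0 := by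
  rw [killedOp_pow_succ_apply', killedOp_single_of_mem hq, map_zero]

theorem green_single_of_mem {q : G} (hq : q ∈ V) (t : ℝ) (p : G) :
    green A V t (Pi.single q 1) p = (Pi.single q 1 : G → ℝ) p := by
  rw [green, tsum_eq_single 0]
  · simp
  · rintro (_ | n) hn
    · exact absurd rfl hn
    · rw [killedOp_pow_succ_single_of_mem hq, Pi.zero_apply, mul_zero]

theorem green_single_of_notMem (ht : t ∈ Set.Ico 0 1) {q : G} (hq : q ∉ V) (p : G) :
    green A V t (Pi.single q 1) p = (Pi.single q 1 : G → ℝ) p + t * green A V t (hit A q) p := by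
  rw [green, (summable_green ht (abs_single_one_le q) p).tsum_eq_zero_add, green, ← tsum_mul_left]
  simp only [killedOp_pow_succ_apply', killedOp_single hq, pow_zero, Module.End.one_apply, one_mul,
    pow_succ' t, mul_assoc]

/-- The generating function of the walks that reach `a`, at a positive time, for the first time
at their last step, without having visited `V` before. -/
noncomputable def firstPassage (A : Finset G) (V : Set G) (t : ℝ) (a p : G) : ℝ :=
  t * green A (insert a V) t (hit A a) p

/-- Both sides solve `u = f + t T u`, and bounded solutions are unique. -/
theorem green_eq_add_firstPassage_mul {a : G} (ha : a ∉ V) (ht : t ∈ Set.Ico 0 1)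
    (hf : ∀ p, |f p| ≤ K) (p : G) :
    green A V t f p =
      green A (insert a V) t f p + firstPassage A V t a p * green A V t f a := by
  set c := t * green A V t f a with hc
  set e : G → ℝ := green A V t f - green A (insert a V) t f - c • green A (insert a V) t (hit A a)
    with he
  have hbound (p : G) :
      |e p| ≤ (1 - t)⁻¹ * K + (1 - t)⁻¹ * K + |c| * ((1 - t)⁻¹ * 1) := by
    refine (abs_sub _ _).trans (add_le_add ((abs_sub _ _).trans
      (add_le_add (abs_green_le ht hf p) (abs_green_le ht hf p))) ?_)
    rw [Pi.smul_apply, smul_eq_mul, abs_mul]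
    exact mul_le_mul_of_nonneg_left (abs_green_le ht (abs_hit_le a) p) (abs_nonneg c)
  have hfix (p : G) : e p = t * killedOp A (insert a V) e p := by
    simp only [he, map_sub, map_smul, Pi.sub_apply, Pi.smul_apply, smul_eq_mul]
    rw [green_eq ht hf p, green_eq ht hf p, green_eq ht (abs_hit_le a) p,
      killedOp_eq_insert ha (green A V t f) p]
    ring
  have h0 := eq_zero_of_eq_mul_killedOp ht hbound hfix p
  simp only [he, hc, Pi.sub_apply, Pi.smul_apply, smul_eq_mul] at h0
  rw [firstPassage]
  linear_combination h0

end Point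

theorem killedOp_pow_add_right (a : G) (f : G → ℝ) (n : ℕ) (p : G) :
    (killedOp A V ^ n) f (p + a) =
      (killedOp A ((· + a) ⁻¹' V) ^ n) (fun q => f (q + a)) p := by
  induction n generalizing p with
  | zero => simp
  | succ n ih =>
    classical
    simp only [killedOp_pow_succ_apply, killedOp_apply, Set.indicator_apply, Set.mem_compl_iff,
      Set.mem_preimage, ← ih, add_right_comm p a]

theorem green_add_right (a : G) (t : ℝ) (f : G → ℝ) (p : G) :
    green A V t f (p + a) = green A ((· + a) ⁻¹' V) t (fun q => f (q + a)) p := by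
  simp only [green, killedOp_pow_add_right]

section Symmetric

variable [DecidableEq G]

theorem killedOp_pow_single_eq_zero {v q : G} (hv : v ∈ V) (hq : q ∉ V) (n : ℕ) :
    (killedOp A V ^ n) (Pi.single v 1 : G → ℝ) q = 0 := by
  cases n with
  | zero => simp [show q ≠ v from fun h => hq (h ▸ hv)]
  | succ n => rw [killedOp_pow_succ_single_of_mem hv, Pi.zero_apply]

theorem hit_eq_sum_single (hA : ∀ s ∈ A, -s ∈ A) (p : G) :
    hit A p = (A.card : ℝ)⁻¹ • ∑ s ∈ A, (Pi.single (p + s) 1 : G → ℝ) := by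
  funext q
  rw [hit_apply, Pi.smul_apply, Finset.sum_apply, smul_eq_mul]
  congr 1
  refine Finset.sum_nbij' (- ·) (- ·) hA hA (by simp) (by simp) fun s _ => ?_
  simp only [Pi.single_apply, ← sub_eq_add_neg, eq_sub_iff_add_eq]

theorem killedOp_pow_succ_single_of_comm (hA : ∀ s ∈ A, -s ∈ A) {n : ℕ} {q : G} (hq : q ∉ V)
    (hcomm : ∀ p ∉ V,
      (killedOp A V ^ n) (Pi.single q 1 : G → ℝ) p = (killedOp A V ^ n) (Pi.single p 1) q)
    (p : G) :
    (killedOp A V ^ (n + 1)) (Pi.single q 1 : G → ℝ) p = (killedOp A V ^ n) (hit A p) q := by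
  have hind (p' : G) : Vᶜ.indicator ((killedOp A V ^ n) (Pi.single q 1)) p' =
      (killedOp A V ^ n) (Pi.single p' 1 : G → ℝ) q := by
    by_cases hp' : p' ∈ V
    · rw [killedOp_pow_single_eq_zero hp' hq]
      simp [hp']
    · simp [hp', hcomm p' hp']
  rw [killedOp_pow_succ_apply, killedOp_apply, hit_eq_sum_single hA]
  simp [hind, Finset.sum_apply]

theorem killedOp_pow_single_comm (hA : ∀ s ∈ A, -s ∈ A) (n : ℕ) {p q : G} (hp : p ∉ V)
    (hq : q ∉ V) :
    (killedOp A V ^ n) (Pi.single q 1 : G → ℝ) p = (killedOp A V ^ n) (Pi.single p 1) q := by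
  induction n generalizing p with
  | zero => simp [Pi.single_apply, eq_comm]
  | succ n ih =>
    rw [killedOp_pow_succ_single_of_comm hA hq (fun _ => ih), killedOp_pow_succ_apply',
      killedOp_single hp]

theorem killedOp_pow_succ_single (hA : ∀ s ∈ A, -s ∈ A) (n : ℕ) {q : G} (hq : q ∉ V) (p : G) :
    (killedOp A V ^ (n + 1)) (Pi.single q 1 : G → ℝ) p = (killedOp A V ^ n) (hit A p) q :=
  killedOp_pow_succ_single_of_comm hA hq (fun _ hp => killedOp_pow_single_comm hA n hp hq) p

theorem green_single_comm (hA : ∀ s ∈ A, -s ∈ A) (t : ℝ) {p q : G} (hp : p ∉ V) (hq : q ∉ V) :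
    green A V t (Pi.single q 1) p = green A V t (Pi.single p 1) q := by
  simp only [green, killedOp_pow_single_comm hA _ hp hq]

theorem green_single_eq_firstPassage (hA : ∀ s ∈ A, -s ∈ A) (ht : t ∈ Set.Ico 0 1) {p q : G}
    (hp : p ∈ V) (hq : q ∉ V) :
    green A V t (Pi.single q 1) p = firstPassage A V t p q := by
  have hpq : p ≠ q := fun h => hq (h ▸ hp)
  rw [firstPassage, Set.insert_eq_of_mem hp, green, green, ← tsum_mul_left,
    (summable_green ht (abs_single_one_le q) p).tsum_eq_zero_add]
  simp only [killedOp_pow_succ_single hA _ hq, pow_zero, Module.End.one_apply, one_mul,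
    Pi.single_eq_of_ne hpq, zero_add, pow_succ' t, mul_assoc]

end Symmetric

end KilledWalk

section SlitPlaneWalks

/-- The steps `sqSteps` as a `Finset`. -/
def squareSteps : Finset (ℤ × ℤ) := {(1, 0), (-1, 0), (0, 1), (0, -1)}

theorem coe_squareSteps : (squareSteps : Set (ℤ × ℤ)) = sqSteps := by
  simp [squareSteps, sqSteps]

theorem card_squareSteps : squareSteps.card = 4 := rfl

theorem neg_mem_squareSteps : ∀ s ∈ squareSteps, -s ∈ squareSteps := by decide

theorem mem_slitH {p : ℤ × ℤ} : p ∈ slitH ↔ p.2 = 0 ∧ p.1 ≤ 0 := Iff.rfl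

theorem zero_mem_slitH : (0 : ℤ × ℤ) ∈ slitH := by simp [mem_slitH]

theorem natCast_notMem_slitH {k : ℕ} (hk : 1 ≤ k) : ((k : ℤ), (0 : ℤ)) ∉ slitH := by
  simp only [mem_slitH, true_and]
  omega

/-- `a_{k,0}(n) / 4ⁿ`. -/
noncomputable def axisProb (k n : ℕ) : ℝ :=
  (killedOp squareSteps slitH ^ n) (Pi.single ((k : ℤ), 0) 1) 0

/-- The probability that the simple random walk from `(k,0)` avoids `slitH` at the times
`1, …, n`. -/
noncomputable def survivalProb (k n : ℕ) : ℝ :=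
  (killedOp squareSteps slitH ^ n) 1 ((k : ℤ), 0)

/-- The probability that the simple random walk from the origin avoids `slitH ∪ {(k,0)}` at the
times `1, …, n`. -/
noncomputable def avoidProb (k n : ℕ) : ℝ :=
  (killedOp squareSteps (insert ((k : ℤ), 0) slitH) ^ n) 1 0

theorem mem_walks_slitH {n : ℕ} {w : Fin (n + 1) → ℤ × ℤ} :
    w ∈ walks squareSteps slitH n 0 ↔ IsSlitWalk sqSteps n w := by
  rw [mem_walks, IsSlitWalk, ← coe_squareSteps]
  simp [Fin.forall_fin_succ (P := fun m => 1 ≤ (m : ℕ) → w m ∉ slitH), Prod.zero_eq_mk]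

theorem mem_walks_insert_slitH {k n : ℕ} (hk : 1 ≤ k) {w : Fin (n + 1) → ℤ × ℤ} :
    w ∈ walks squareSteps (insert ((k : ℤ), 0) slitH) n 0 ↔
      IsSlitWalk sqSteps n w ∧ ¬∃ m, w m = ((k : ℤ), 0) := by
  have h0 : (0 : ℤ × ℤ) ≠ ((k : ℤ), 0) := fun h =>
    natCast_notMem_slitH hk (h ▸ zero_mem_slitH)
  rw [← mem_walks_slitH, mem_walks, mem_walks]
  simp only [Set.mem_insert_iff, not_or, forall_and, not_exists, Fin.forall_fin_succ (n := n)]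
  constructor
  · rintro ⟨hw0, hA, hk, hV⟩
    exact ⟨⟨hw0, hA, hV⟩, hw0 ▸ h0, hk⟩
  · rintro ⟨⟨hw0, hA, hV⟩, -, hk⟩
    exact ⟨hw0, hA, hk, hV⟩

theorem slitTotal_eq (n : ℕ) : (slitTotal sqSteps n : ℝ) = 4 ^ n * survivalProb 0 n := by
  rw [slitTotal, Nat.subtype_card _ fun _ => mem_walks_slitH, card_walks, card_squareSteps]
  rfl

theorem card_walks_filter_eq_axisProb_mul (k : ℕ) {m n : ℕ} (hmn : m ≤ n) :
    (({w ∈ walks squareSteps slitH n 0 | w ⟨m, by omega⟩ = ((k : ℤ), 0)}.card : ℕ) : ℝ) =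
      4 ^ n * (axisProb k m * survivalProb k (n - m)) := by
  obtain ⟨j, rfl⟩ := Nat.exists_eq_add_of_le' hmn
  rw [card_walks_filter_eq, card_squareSteps, Nat.add_sub_cancel]
  rfl

theorem slitCount_eq (k n : ℕ) : (slitCount sqSteps k 0 n : ℝ) = 4 ^ n * axisProb k n := by
  classical
  have h := card_walks_filter_eq_axisProb_mul k le_rfl (n := n)
  rw [Nat.sub_self, survivalProb, pow_zero, Module.End.one_apply, Pi.one_apply, mul_one] at h
  rw [← h, slitCount, Nat.subtype_card]
  intro w
  rw [Finset.mem_filter, mem_walks_slitH]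
  rfl

theorem totalVisits_eq (k n : ℕ) :
    (totalVisits k n : ℝ) =
      4 ^ n * ∑ m ∈ Finset.range (n + 1), axisProb k m * survivalProb k (n - m) := by
  classical
  have hcard : totalVisits k n =
      ({p ∈ walks squareSteps slitH n 0 ×ˢ (Finset.univ : Finset (Fin (n + 1))) |
        p.1 p.2 = ((k : ℤ), 0)}).card :=
    Nat.subtype_card _ fun p => by simp [mem_walks_slitH]
  rw [hcard, Finset.card_filter, Finset.sum_product_right, Finset.mul_sum, Finset.sum_range]
  push_cast
  refine Finset.sum_congr rfl fun m _ => ?_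
  rw [← card_walks_filter_eq_axisProb_mul k (Nat.lt_succ_iff.1 m.isLt), Finset.card_filter]
  push_cast
  rfl

theorem visitCount_eq {k : ℕ} (hk : 1 ≤ k) (n : ℕ) :
    (visitCount k n : ℝ) = 4 ^ n * (survivalProb 0 n - avoidProb k n) := by
  classical
  have hvisit : visitCount k n =
      ({w ∈ walks squareSteps slitH n 0 | ∃ m, w m = ((k : ℤ), 0)}).card :=
    Nat.subtype_card _ fun w => by rw [Finset.mem_filter, mem_walks_slitH]
  have havoid : walks squareSteps (insert ((k : ℤ), 0) slitH) n 0 =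
      {w ∈ walks squareSteps slitH n 0 | ¬∃ m, w m = ((k : ℤ), 0)} := by
    ext w
    rw [mem_walks_insert_slitH hk, Finset.mem_filter, mem_walks_slitH]
  have hsum := Finset.card_filter_add_card_filter_not (s := walks squareSteps slitH n 0)
    fun w => ∃ m, w m = ((k : ℤ), 0)
  have hcard (V : Set (ℤ × ℤ)) := card_walks (A := squareSteps) (V := V) n 0
  rw [card_squareSteps] at hcard
  rw [← hvisit, ← havoid, ← Nat.cast_inj (R := ℝ), Nat.cast_add, hcard, hcard] at hsum
  rw [survivalProb, avoidProb]
  push_cast at hsum ⊢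
  linear_combination hsum

end SlitPlaneWalks

section AxisGeneratingFunctions

/-- The generating function of `axisProb k`. -/
noncomputable def axisGF (t : ℝ) (k : ℕ) : ℝ :=
  green squareSteps slitH t (Pi.single ((k : ℤ), 0) 1) 0

/-- The generating function of `survivalProb k`. -/
noncomputable def survivalGF (t : ℝ) (k : ℕ) : ℝ :=
  green squareSteps slitH t 1 ((k : ℤ), 0)

/-- The generating function of the walks from `(k,0)` that enter `slitH` at the origin. -/
noncomputable def tipPassage (t : ℝ) (k : ℕ) : ℝ :=
  firstPassage squareSteps slitH t 0 ((k : ℤ), 0)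

/-- The generating function of the walks from `(1,0)` to itself that avoid `slitH`. -/
noncomputable def loopGF (t : ℝ) : ℝ :=
  green squareSteps slitH t (Pi.single (1, 0) 1) (1, 0)

variable {t : ℝ}

theorem axisGF_zero (t : ℝ) : axisGF t 0 = 1 := by
  simpa [axisGF, Prod.zero_eq_mk] using
    green_single_of_mem zero_mem_slitH t (0 : ℤ × ℤ) (A := squareSteps)

theorem axisGF_nonneg (ht : 0 ≤ t) (k : ℕ) : 0 ≤ axisGF t k :=
  green_nonneg ht (single_one_nonneg _) _

theorem axisGF_eq_tipPassage (ht : t ∈ Set.Ico 0 1) {k : ℕ} (hk : 1 ≤ k) :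
    axisGF t k = tipPassage t k :=
  green_single_eq_firstPassage neg_mem_squareSteps ht zero_mem_slitH (natCast_notMem_slitH hk)

theorem preimage_insert_slitH :
    (· + ((1, 0) : ℤ × ℤ)) ⁻¹' insert ((1 : ℤ), (0 : ℤ)) slitH = slitH := by
  ext ⟨a, b⟩
  simp only [Set.mem_preimage, Set.mem_insert_iff, mem_slitH, Prod.mk_add_mk, Prod.mk.injEq]
  omega

theorem green_insert_slitH (t : ℝ) (f : ℤ × ℤ → ℝ) (k : ℕ) :
    green squareSteps (insert (1, 0) slitH) t f (((k + 1 : ℕ) : ℤ), 0) =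
      green squareSteps slitH t (fun q => f (q + (1, 0))) ((k : ℤ), 0) := by
  have h := green_add_right (A := squareSteps) (V := insert (1, 0) slitH) (1, 0) t f ((k : ℤ), 0)
  rw [preimage_insert_slitH] at h
  simpa using h

/-- The slit `slitH ∪ {(1,0)}` is a translate of `slitH`, so decomposing a walk at its first visit
to `(1,0)` relates the walks from `(k+1,0)` to those from `(k,0)`. -/
theorem green_slitH_succ (ht : t ∈ Set.Ico 0 1) {f : ℤ × ℤ → ℝ} {K : ℝ} (hf : ∀ p, |f p| ≤ K)
    (k : ℕ) :
    green squareSteps slitH t f (((k + 1 : ℕ) : ℤ), 0) =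
      green squareSteps slitH t (fun q => f (q + (1, 0))) ((k : ℤ), 0) +
        tipPassage t k * green squareSteps slitH t f (1, 0) := by
  have hhit : (fun q : ℤ × ℤ => hit squareSteps (1, 0) (q + (1, 0))) = hit squareSteps 0 := by
    funext q
    simpa using hit_add_right (A := squareSteps) 0 (1, 0) q
  rw [green_eq_add_firstPassage_mul (natCast_notMem_slitH le_rfl) ht hf, firstPassage,
    tipPassage, firstPassage, Set.insert_eq_of_mem zero_mem_slitH, Nat.cast_one,
    green_insert_slitH, green_insert_slitH, hhit]

theorem single_succ_add (k : ℕ) :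
    (fun q => (Pi.single (((k + 1 : ℕ) : ℤ), 0) 1 : ℤ × ℤ → ℝ) (q + (1, 0))) =
      Pi.single ((k : ℤ), 0) 1 := by
  funext ⟨a, b⟩
  simp [Pi.single_apply]

theorem loopGF_mul_one_sub (ht : t ∈ Set.Ico 0 1) : loopGF t * (1 - tipPassage t 0) = 1 := by
  have h := green_slitH_succ ht (abs_single_one_le (((0 + 1 : ℕ) : ℤ), 0)) 0
  have h0 : green squareSteps slitH t (Pi.single (((0 : ℕ) : ℤ), 0) 1) (((0 : ℕ) : ℤ), 0) = 1 :=
    axisGF_zero t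
  rw [single_succ_add, h0] at h
  simp only [zero_add, Nat.cast_one] at h
  rw [loopGF]
  linear_combination h

theorem loopGF_pos (ht : t ∈ Set.Ico 0 1) : 0 < loopGF t := by
  refine lt_of_le_of_ne (green_nonneg ht.1 (single_one_nonneg _) _) fun h => ?_
  have hone := loopGF_mul_one_sub ht
  rw [show loopGF t = 0 from h.symm, zero_mul] at hone
  exact zero_ne_one hone

theorem green_single_succ_one (ht : t ∈ Set.Ico 0 1) {k : ℕ} (hk : 1 ≤ k) :
    green squareSteps slitH t (Pi.single (((k + 1 : ℕ) : ℤ), 0) 1) (1, 0) =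
      axisGF t k * loopGF t := by
  have hk0 : (Pi.single (((0 : ℕ) : ℤ), 0) 1 : ℤ × ℤ → ℝ) ((k : ℤ), 0) = 0 := by
    simp [show k ≠ 0 by omega]
  have h0 : (((0 : ℕ) : ℤ), (0 : ℤ)) ∈ slitH := zero_mem_slitH
  have h1 : ((1 : ℤ), (0 : ℤ)) ∉ slitH := natCast_notMem_slitH le_rfl
  have h := green_slitH_succ ht (abs_single_one_le (((0 + 1 : ℕ) : ℤ), 0)) k
  rw [single_succ_add, green_single_of_mem h0, hk0, zero_add,
    ← axisGF_eq_tipPassage ht hk] at h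
  rw [green_single_comm neg_mem_squareSteps t h1 (natCast_notMem_slitH (Nat.le_add_left 1 k))]
  simpa [loopGF] using h

theorem green_single_succ_self (ht : t ∈ Set.Ico 0 1) (k : ℕ) :
    green squareSteps slitH t (Pi.single (((k + 1 : ℕ) : ℤ), 0) 1) (((k + 1 : ℕ) : ℤ), 0) =
      loopGF t * ∑ l ∈ Finset.range (k + 1), axisGF t l ^ 2 := by
  induction k with
  | zero => simp [axisGF_zero, loopGF]
  | succ k ih =>
    rw [green_slitH_succ ht (abs_single_one_le _), single_succ_add, ih,
      green_single_succ_one ht (by omega), ← axisGF_eq_tipPassage ht (by omega),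
      Finset.sum_range_succ _ (k + 1)]
    ring

theorem survivalGF_succ (ht : t ∈ Set.Ico 0 1) (k : ℕ) :
    survivalGF t (k + 1) = survivalGF t k + tipPassage t k * survivalGF t 1 :=
  green_slitH_succ ht (K := 1) (by simp) k

theorem survivalGF_succ_eq (ht : t ∈ Set.Ico 0 1) (k : ℕ) :
    survivalGF t (k + 1) =
      loopGF t * survivalGF t 0 * ∑ l ∈ Finset.range (k + 1), axisGF t l := by
  have hone : survivalGF t 1 = loopGF t * survivalGF t 0 := by
    linear_combination -survivalGF t 1 * loopGF_mul_one_sub ht + loopGF t * survivalGF_succ ht 0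
  induction k with
  | zero => simp [axisGF_zero, hone]
  | succ k ih =>
    rw [survivalGF_succ ht, ih, ← axisGF_eq_tipPassage ht (by omega),
      Finset.sum_range_succ _ (k + 1), hone]
    ring

theorem loopGF_mul_sum_sq_mul_avoidGF (ht : t ∈ Set.Ico 0 1) {k : ℕ} (hk : 1 ≤ k) :
    (loopGF t * ∑ l ∈ Finset.range k, axisGF t l ^ 2) * ∑' n, t ^ n * avoidProb k n =
      (loopGF t * ∑ l ∈ Finset.range k, axisGF t l ^ 2) * survivalGF t 0 -
        axisGF t k * survivalGF t k := by
  have hk0 : (0 : ℤ × ℤ) ≠ ((k : ℤ), 0) := fun h => natCast_notMem_slitH hk (h ▸ zero_mem_slitH)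
  have hdiag := green_single_succ_self ht (k - 1)
  rw [Nat.sub_add_cancel hk] at hdiag
  have hsurv : survivalGF t 0 = ∑' n, t ^ n * avoidProb k n +
      firstPassage squareSteps slitH t ((k : ℤ), 0) 0 * survivalGF t k :=
    green_eq_add_firstPassage_mul (natCast_notMem_slitH hk) ht (K := 1) (by simp) 0
  have haxis := green_eq_add_firstPassage_mul (A := squareSteps) (natCast_notMem_slitH hk) ht
    (abs_single_one_le ((k : ℤ), 0)) 0
  rw [green_single_of_mem (Set.mem_insert _ _), Pi.single_eq_of_ne hk0, hdiag] at haxis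
  rw [hsurv, show axisGF t k = _ from haxis]
  ring

theorem survivalProb_nonneg (k n : ℕ) : 0 ≤ survivalProb k n :=
  killedOp_pow_nonneg (by simp) n _

theorem survivalProb_zero_right (k : ℕ) : survivalProb k 0 = 1 := rfl

theorem killedOp_pow_one_eq_one_of_lt_fst {n : ℕ} {p : ℤ × ℤ} (hp : (n : ℤ) < p.1) :
    (killedOp squareSteps slitH ^ n) 1 p = 1 := by
  induction n generalizing p with
  | zero => rfl
  | succ n ih =>
    push_cast at hp
    have hstep : ∀ s ∈ squareSteps,
        slitHᶜ.indicator ((killedOp squareSteps slitH ^ n) 1) (p + s) = 1 := by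
      intro s hs
      have hs1 : -1 ≤ s.1 := (by decide : ∀ s ∈ squareSteps, (-1 : ℤ) ≤ s.1) s hs
      have hlt : (n : ℤ) < (p + s).1 := by rw [Prod.fst_add]; omega
      rw [Set.indicator_of_mem, ih hlt]
      simp only [Set.mem_compl_iff, mem_slitH]
      omega
    rw [killedOp_pow_succ_apply, killedOp_apply, Finset.sum_congr rfl hstep]
    simp [card_squareSteps]

theorem tendsto_survivalGF_atTop (ht : t ∈ Set.Ico 0 1) :
    Tendsto (survivalGF t) atTop (𝓝 (1 - t)⁻¹) := by
  rw [← tsum_geometric_of_lt_one ht.1 ht.2]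
  refine tendsto_tsum_of_dominated_convergence (bound := fun n => t ^ n * 1)
    ((summable_geometric_of_lt_one ht.1 ht.2).mul_right 1) (fun n => ?_)
    (Eventually.of_forall fun k n => norm_green_term_le ht.1 (by simp) n _)
  refine tendsto_const_nhds.congr' ?_
  filter_upwards [eventually_gt_atTop n] with k hk
  rw [killedOp_pow_one_eq_one_of_lt_fst (Int.ofNat_lt.2 hk), mul_one]

theorem summable_survivalGF (ht : t ∈ Set.Ico 0 1) (k : ℕ) :
    Summable fun n => t ^ n * survivalProb k n :=
  summable_green ht (K := 1) (by simp) _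

theorem survivalGF_pos (ht : t ∈ Set.Ico 0 1) (k : ℕ) : 0 < survivalGF t k := by
  have h := (summable_survivalGF ht k).le_tsum 0
    fun n _ => mul_nonneg (pow_nonneg ht.1 n) (survivalProb_nonneg k n)
  rw [pow_zero, one_mul, survivalProb_zero_right] at h
  exact one_pos.trans_le h

theorem hasSum_axisGF (ht : t ∈ Set.Ico 0 1) :
    HasSum (axisGF t) ((1 - t)⁻¹ / (loopGF t * survivalGF t 0)) := by
  have hpos : 0 < loopGF t * survivalGF t 0 := mul_pos (loopGF_pos ht) (survivalGF_pos ht 0)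
  rw [hasSum_iff_tendsto_nat_of_nonneg (axisGF_nonneg ht.1), ← tendsto_add_atTop_iff_nat 1]
  refine (((tendsto_survivalGF_atTop ht).comp (tendsto_add_atTop_nat 1)).div_const _).congr
    fun k => ?_
  rw [Function.comp_apply, survivalGF_succ_eq ht k, mul_div_cancel_left₀ _ hpos.ne']

end AxisGeneratingFunctions

section CircleSum

open PowerSeries

/-- An absolutely convergent expansion in nonnegative powers of `x` on the unit circle: the
coefficients of `φ` are absolutely summable and `φ` sums to `f x` whenever `‖x‖ = 1`. -/
structure HasCircleSum {𝕜 : Type*} [NormedField 𝕜] (φ : PowerSeries 𝕜) (f : 𝕜 → 𝕜) : Prop where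
  summable_norm : Summable fun n => ‖coeff n φ‖
  hasSum : ∀ x, ‖x‖ = 1 → HasSum (fun n => coeff n φ * x ^ n) (f x)

namespace HasCircleSum

variable {𝕜 : Type*} [NormedField 𝕜] {φ ψ : PowerSeries 𝕜} {f g : 𝕜 → 𝕜}

theorem congr (h : HasCircleSum φ f) (hfg : ∀ x, ‖x‖ = 1 → f x = g x) : HasCircleSum φ g :=
  ⟨h.summable_norm, fun x hx => hfg x hx ▸ h.hasSum x hx⟩

theorem summable_norm_mul_pow (h : HasCircleSum φ f) {x : 𝕜} (hx : ‖x‖ = 1) :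
    Summable fun n => ‖coeff n φ * x ^ n‖ := by
  simpa [hx] using h.summable_norm

theorem of_coeff_eq_zero {m : ℕ} (hφ : ∀ n ∉ Finset.range m, coeff n φ = 0) :
    HasCircleSum φ fun x => ∑ n ∈ Finset.range m, coeff n φ * x ^ n :=
  ⟨summable_of_ne_finset_zero (s := Finset.range m) fun n hn => by rw [hφ n hn, norm_zero],
    fun x _ => hasSum_sum_of_ne_finset_zero fun n hn => by rw [hφ n hn, zero_mul]⟩

theorem const (c : 𝕜) : HasCircleSum (C c) fun _ => c := by
  refine (of_coeff_eq_zero (m := 1) fun n hn => ?_).congr fun x _ => by simp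
  rw [coeff_C, if_neg (by simpa using hn)]

theorem one_sub_C_mul_X (u : 𝕜) : HasCircleSum (1 - C u * X) fun x => 1 - u * x := by
  refine (of_coeff_eq_zero (m := 2) fun n hn => ?_).congr fun x _ => ?_
  · rw [Finset.mem_range] at hn
    rw [map_sub, coeff_C_mul, coeff_one, coeff_X, if_neg (by omega), if_neg (by omega), mul_zero,
      sub_zero]
  · simp [Finset.sum_range_succ, coeff_one, coeff_X, sub_eq_add_neg]

theorem geometric {u : 𝕜} (hu : ‖u‖ < 1) :
    HasCircleSum (PowerSeries.mk fun n => u ^ n) fun x => (1 - u * x)⁻¹ := by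
  refine ⟨?_, fun x hx => ?_⟩
  · simpa using summable_geometric_of_lt_one (norm_nonneg u) hu
  · simpa [mul_pow] using hasSum_geometric_of_norm_lt_one (by simpa [hx] using hu : ‖u * x‖ < 1)

variable [CompleteSpace 𝕜]

theorem mul (hφ : HasCircleSum φ f) (hψ : HasCircleSum ψ g) :
    HasCircleSum (φ * ψ) fun x => f x * g x := by
  refine ⟨?_, fun x hx => ?_⟩
  · simp only [coeff_mul]
    exact summable_norm_sum_mul_antidiagonal_of_summable_norm (f := fun n => coeff n φ)
      (g := fun n => coeff n ψ) hφ.summable_norm hψ.summable_norm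
  · have hcoeff (n : ℕ) : coeff n (φ * ψ) * x ^ n = ∑ kl ∈ Finset.HasAntidiagonal.antidiagonal n,
        coeff kl.1 φ * x ^ kl.1 * (coeff kl.2 ψ * x ^ kl.2) := by
      rw [coeff_mul, Finset.sum_mul]
      refine Finset.sum_congr rfl fun kl hkl => ?_
      rw [← Finset.HasAntidiagonal.mem_antidiagonal.mp hkl, pow_add]
      ring
    have hφx := hφ.summable_norm_mul_pow hx
    have hψx := hψ.summable_norm_mul_pow hx
    simp only [hcoeff]
    rw [← (hφ.hasSum x hx).tsum_eq, ← (hψ.hasSum x hx).tsum_eq,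
      tsum_mul_tsum_eq_tsum_sum_antidiagonal_of_summable_norm hφx hψx]
    exact (summable_norm_sum_mul_antidiagonal_of_summable_norm hφx hψx).of_norm.hasSum

end HasCircleSum

theorem eq_zero_of_hasSum_circle {c : ℤ → ℂ} (hc : Summable fun i => ‖c i‖)
    (h : ∀ x : ℂ, ‖x‖ = 1 → HasSum (fun i => c i * x ^ i) 0) : c = 0 := by
  have hsum : Summable fun i => c i • (fourier i : C(UnitAddCircle, ℂ)) :=
    Summable.of_norm (by simpa [norm_smul, fourier_norm] using hc)
  have hzero : HasSum (fun i => c i • (fourier i : C(UnitAddCircle, ℂ))) 0 := by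
    refine (Summable.hasSum_iff hsum).2 (ContinuousMap.ext fun θ => ?_)
    have hθ := h (AddCircle.toCircle θ) (Circle.norm_coe _)
    refine (ContinuousMap.hasSum_apply hsum.hasSum θ).unique (hθ.congr_fun fun i => ?_)
    simp [fourier_apply, AddCircle.toCircle_zsmul]
  funext k
  have hinner := (hzero.mapL (ContinuousMap.toLp (E := ℂ) 2 AddCircle.haarAddCircle ℂ)).mapL
    (innerSL ℂ (fourierLp 2 k : MeasureTheory.Lp ℂ 2 AddCircle.haarAddCircle))
  have hcoeff (i : ℤ) : innerSL ℂ (fourierLp 2 k : MeasureTheory.Lp ℂ 2 AddCircle.haarAddCircle)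
      (ContinuousMap.toLp (E := ℂ) 2 AddCircle.haarAddCircle ℂ
        (c i • (fourier i : C(UnitAddCircle, ℂ)))) = if i = k then c i else 0 := by
    rw [map_smul, map_smul, innerSL_apply_apply]
    have := orthonormal_iff_ite.1 (orthonormal_fourier (T := 1)) k i
    rw [fourierLp] at this ⊢
    rw [show inner ℂ _ _ = _ from this]
    simp [eq_comm]
  simp only [hcoeff, map_zero] at hinner
  exact (hasSum_ite_eq k (c k)).unique (by
    refine hinner.congr_fun fun i => ?_
    split_ifs with h <;> simp [h])

theorem hasCircleSum_iff_int {φ : PowerSeries ℂ} {f : ℂ → ℂ} {a : ℤ → ℂ}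
    (ha : ∀ n : ℕ, a n = coeff n φ) (ha0 : ∀ i < 0, a i = 0) :
    HasCircleSum φ f ↔ (Summable fun i => ‖a i‖) ∧
      ∀ x : ℂ, ‖x‖ = 1 → HasSum (fun i => a i * x ^ i) (f x) := by
  have hrange (i : ℤ) (hi : i ∉ Set.range ((↑) : ℕ → ℤ)) : a i = 0 :=
    ha0 i (not_le.1 fun h => hi ⟨i.toNat, Int.toNat_of_nonneg h⟩)
  have hsummable : (Summable fun n => ‖coeff n φ‖) ↔ Summable fun i => ‖a i‖ := by
    rw [← Nat.cast_injective.summable_iff (f := fun i => ‖a i‖)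
      fun i hi => by rw [hrange i hi, norm_zero]]
    simp only [Function.comp_def, ha]
  have hhasSum (x : ℂ) : HasSum (fun n => coeff n φ * x ^ n) (f x) ↔
      HasSum (fun i => a i * x ^ i) (f x) := by
    rw [← Nat.cast_injective.hasSum_iff (f := fun i => a i * x ^ i)
      fun i hi => by rw [hrange i hi, zero_mul]]
    simp only [Function.comp_def, ha, zpow_natCast]
  rw [← hsummable]
  exact ⟨fun h => ⟨h.summable_norm, fun x hx => (hhasSum x).1 (h.hasSum x hx)⟩,
    fun h => ⟨h.1, fun x hx => (hhasSum x).2 (h.2 x hx)⟩⟩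

theorem exists_int_extension (φ : PowerSeries ℂ) :
    ∃ a : ℤ → ℂ, (∀ n : ℕ, a n = coeff n φ) ∧ ∀ i < 0, a i = 0 :=
  ⟨fun i => if 0 ≤ i then coeff i.toNat φ else 0, fun n => by simp,
    fun i hi => if_neg (not_le.2 hi)⟩

/-- The coefficients of the two-sided expansion of the difference vanish, so a function which
expands in nonnegative powers both of `x` and of `x⁻¹` is constant. -/
theorem eq_C_of_hasCircleSum_inv {φ ψ : PowerSeries ℂ} {f g : ℂ → ℂ} (hφ : HasCircleSum φ f)
    (hψ : HasCircleSum ψ g) (hfg : ∀ x, ‖x‖ = 1 → f x = g x⁻¹) :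
    φ = C (constantCoeff ψ) := by
  obtain ⟨a, ha, ha0⟩ := exists_int_extension φ
  obtain ⟨b, hb, hb0⟩ := exists_int_extension ψ
  obtain ⟨has, hax⟩ := (hasCircleSum_iff_int ha ha0).1 hφ
  obtain ⟨hbs, hbx⟩ := (hasCircleSum_iff_int hb hb0).1 hψ
  have hbs' : Summable fun i => ‖b (-i)‖ := (Equiv.neg ℤ).summable_iff.2 hbs
  have hab : (fun i => a i - b (-i)) = 0 := by
    refine eq_zero_of_hasSum_circle ((has.add hbs').of_nonneg_of_le (fun _ => norm_nonneg _)
      fun i => norm_sub_le _ _) fun x hx => ?_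
    have hbx' : HasSum (fun i => b (-i) * x ^ i) (g x⁻¹) := by
      simpa [Function.comp_def] using (Equiv.neg ℤ).hasSum_iff.2 (hbx x⁻¹ (by simp [hx]))
    simpa [sub_mul, hfg x hx] using (hax x hx).sub hbx'
  ext n
  rw [← ha, sub_eq_zero.1 (congrFun hab n), coeff_C]
  split_ifs with hn
  · subst hn
    simpa using hb 0
  · exact hb0 _ (by omega)

theorem one_sub_mul_ne_zero {w x : ℂ} (hw : ‖w‖ < 1) (hx : ‖x‖ = 1) : 1 - w * x ≠ 0 := by
  intro h
  have hwx : ‖w * x‖ < 1 := by simpa [hx] using hw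
  rw [← sub_eq_zero.1 h, norm_one] at hwx
  exact lt_irrefl _ hwx

/-- Wiener–Hopf: dividing by the factors in `x⁻¹` leaves a nonnegative power series in `x` on the
left and one in `x⁻¹` on the right. -/
theorem wienerHopf_factorization {φ ψ : PowerSeries ℂ} {f g : ℂ → ℂ} (hφ : HasCircleSum φ f)
    (hψ : HasCircleSum ψ g) {c u v : ℂ} (hu : ‖u‖ < 1) (hv : ‖v‖ < 1)
    (hfg : ∀ x, ‖x‖ = 1 →
      f x ^ 2 * (c * ((1 - u * x) * (1 - u * x⁻¹) * ((1 - v * x) * (1 - v * x⁻¹)))) =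
        g x⁻¹ ^ 2)
    (hφ0 : constantCoeff φ = 1) (hc : c ≠ 0) :
    c = constantCoeff ψ ^ 2 ∧ φ ^ 2 * ((1 - C u * X) * (1 - C v * X)) = 1 := by
  have hleft := (HasCircleSum.const c).mul
    ((hφ.mul hφ).mul ((HasCircleSum.one_sub_C_mul_X u).mul (HasCircleSum.one_sub_C_mul_X v)))
  have hright := (hψ.mul hψ).mul ((HasCircleSum.geometric hu).mul (HasCircleSum.geometric hv))
  have hconst := eq_C_of_hasCircleSum_inv hleft hright fun x hx => by
    have hx' : ‖x⁻¹‖ = 1 := by simp [hx]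
    have hu' := one_sub_mul_ne_zero hu hx'
    have hv' := one_sub_mul_ne_zero hv hx'
    rw [← mul_inv, eq_mul_inv_iff_mul_eq₀ (mul_ne_zero hu' hv')]
    linear_combination hfg x hx
  have hc0 : c = constantCoeff ψ ^ 2 := by
    simpa [hφ0, ← pow_two] using congrArg constantCoeff hconst
  refine ⟨hc0, mul_left_cancel₀ (a := C c) (by simpa using hc) ?_⟩
  rw [mul_one, pow_two, hconst]
  simp [hc0, ← pow_two]

end CircleSum

section RowSums

/-- The generating function of the walks from the origin to `q` that avoid `slitH`. -/
noncomputable def slitGreen (t : ℝ) (q : ℤ × ℤ) : ℝ :=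
  green squareSteps slitH t (Pi.single q 1) 0

/-- The generating function of the walks from the origin whose last step leads to `q` and which
avoid `slitH` before that step. It agrees with `slitGreen` off `slitH`. -/
noncomputable def slitEntry (t : ℝ) (q : ℤ × ℤ) : ℝ :=
  t * green squareSteps slitH t (hit squareSteps q) 0

/-- The generating function, in powers of `x`, of `slitGreen` along the row of height `j`. -/
noncomputable def rowSum (t : ℝ) (x : ℂ) (j : ℤ) : ℂ :=
  ∑' i : ℤ, (slitGreen t (i, j) : ℂ) * x ^ i

variable {t : ℝ}

theorem slitGreen_nonneg (ht : 0 ≤ t) (q : ℤ × ℤ) : 0 ≤ slitGreen t q :=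
  green_nonneg ht (single_one_nonneg q) 0

theorem slitGreen_neg_succ (t : ℝ) (n : ℕ) : slitGreen t (-((n + 1 : ℕ) : ℤ), 0) = 0 := by
  have hmem : ((-((n + 1 : ℕ) : ℤ), 0) : ℤ × ℤ) ∈ slitH := by
    rw [mem_slitH]
    omega
  rw [slitGreen, green_single_of_mem hmem, Pi.single_eq_of_ne]
  rw [Ne, Prod.ext_iff, Prod.fst_zero]
  omega

theorem slitGreen_eq_slitEntry (ht : t ∈ Set.Ico 0 1) {q : ℤ × ℤ} (hq : q ∉ slitH) :
    slitGreen t q = slitEntry t q := by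
  have hq0 : (0 : ℤ × ℤ) ≠ q := fun h => hq (h ▸ zero_mem_slitH)
  rw [slitGreen, slitEntry, green_single_of_notMem ht hq, Pi.single_eq_of_ne hq0, zero_add]

theorem slitEntry_zero (t : ℝ) : slitEntry t 0 = tipPassage t 0 := by
  rw [slitEntry, tipPassage, firstPassage, Set.insert_eq_of_mem zero_mem_slitH]
  rfl

theorem slitEntry_eq (ht : t ∈ Set.Ico 0 1) (q : ℤ × ℤ) :
    slitEntry t q = t / 4 * (slitGreen t (q + (1, 0)) + slitGreen t (q + (-1, 0)) +
      slitGreen t (q + (0, 1)) + slitGreen t (q + (0, -1))) := by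
  have hsum : green squareSteps slitH t (∑ s ∈ squareSteps, Pi.single (q + s) 1) 0 =
      ∑ s ∈ squareSteps, slitGreen t (q + s) :=
    green_sum ht (fun s _ => abs_single_one_le (q + s)) 0
  rw [slitEntry, hit_eq_sum_single neg_mem_squareSteps, green_smul, hsum, card_squareSteps]
  simp [squareSteps]
  ring

theorem summable_slitGreen (ht : t ∈ Set.Ico 0 1) : Summable (slitGreen t) := by
  refine summable_of_sum_le (c := (1 - t)⁻¹ * 1) (slitGreen_nonneg ht.1) fun F => ?_
  have hF (p : ℤ × ℤ) : |(∑ q ∈ F, Pi.single q 1 : ℤ × ℤ → ℝ) p| ≤ 1 := by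
    have hp : (∑ q ∈ F, Pi.single q 1 : ℤ × ℤ → ℝ) p = if p ∈ F then 1 else 0 := by
      simp [Finset.sum_apply, Pi.single_apply]
    rw [hp]
    split_ifs <;> simp
  calc ∑ q ∈ F, slitGreen t q = green squareSteps slitH t (∑ q ∈ F, Pi.single q 1) 0 :=
        (green_sum ht (fun q _ => abs_single_one_le q) 0).symm
    _ ≤ (1 - t)⁻¹ * 1 := (le_abs_self _).trans (abs_green_le ht hF 0)

theorem summable_slitEntry (ht : t ∈ Set.Ico 0 1) : Summable (slitEntry t) := by
  have hshift (a : ℤ × ℤ) : Summable fun q => slitGreen t (q + a) :=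
    (summable_slitGreen ht).comp_injective (add_left_injective a)
  simp only [funext (slitEntry_eq ht)]
  exact ((((hshift _).add (hshift _)).add (hshift _)).add (hshift _)).mul_left _

theorem norm_slitGreen_mul_zpow (ht : 0 ≤ t) {x : ℂ} (hx : ‖x‖ = 1) (i j : ℤ) :
    ‖(slitGreen t (i, j) : ℂ) * x ^ i‖ = slitGreen t (i, j) := by
  rw [norm_mul, norm_zpow, hx, one_zpow, mul_one, Complex.norm_real,
    Real.norm_of_nonneg (slitGreen_nonneg ht _)]

theorem summable_norm_row (ht : t ∈ Set.Ico 0 1) {x : ℂ} (hx : ‖x‖ = 1) (j : ℤ) :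
    Summable fun i : ℤ => ‖(slitGreen t (i, j) : ℂ) * x ^ i‖ := by
  simp only [norm_slitGreen_mul_zpow ht.1 hx]
  exact (summable_slitGreen ht).comp_injective (Prod.mk_left_injective j)

theorem hasSum_rowSum (ht : t ∈ Set.Ico 0 1) {x : ℂ} (hx : ‖x‖ = 1) (j : ℤ) :
    HasSum (fun i : ℤ => (slitGreen t (i, j) : ℂ) * x ^ i) (rowSum t x j) :=
  (summable_norm_row ht hx j).of_norm.hasSum

theorem norm_rowSum_le (ht : t ∈ Set.Ico 0 1) {x : ℂ} (hx : ‖x‖ = 1) (j : ℤ) :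
    ‖rowSum t x j‖ ≤ ∑' q, slitGreen t q := by
  refine (norm_tsum_le_tsum_norm (summable_norm_row ht hx j)).trans ?_
  simp only [norm_slitGreen_mul_zpow ht.1 hx]
  exact tsum_comp_le_tsum_of_inj (summable_slitGreen ht) (slitGreen_nonneg ht.1)
    (Prod.mk_left_injective j)

theorem hasSum_shift_mul_zpow {a : ℤ → ℂ} {x S : ℂ} (hx : x ≠ 0)
    (h : HasSum (fun i => a i * x ^ i) S) (m : ℤ) :
    HasSum (fun i => a (i + m) * x ^ i) (x ^ (-m) * S) := by
  refine (((Equiv.addRight m).hasSum_iff.2 h).mul_left (x ^ (-m))).congr_fun fun i => ?_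
  simp only [Function.comp_apply, Equiv.coe_addRight, zpow_add₀ hx, zpow_neg]
  field_simp

theorem hasSum_slitEntry_row (ht : t ∈ Set.Ico 0 1) {x : ℂ} (hx : ‖x‖ = 1) (j : ℤ) :
    HasSum (fun i : ℤ => (slitEntry t (i, j) : ℂ) * x ^ i)
      (t / 4 * ((x + x⁻¹) * rowSum t x j + rowSum t x (j + 1) + rowSum t x (j - 1))) := by
  have hx0 : x ≠ 0 := norm_ne_zero_iff.1 (by simp [hx])
  have hright := hasSum_shift_mul_zpow hx0 (hasSum_rowSum ht hx j) 1
  have hleft := hasSum_shift_mul_zpow hx0 (hasSum_rowSum ht hx j) (-1)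
  have hsum := (((hright.add hleft).add (hasSum_rowSum ht hx (j + 1))).add
    (hasSum_rowSum ht hx (j - 1))).mul_left (t / 4 : ℂ)
  have hvalue : (x + x⁻¹) * rowSum t x j =
      x ^ (-1 : ℤ) * rowSum t x j + x ^ (-(-1) : ℤ) * rowSum t x j := by
    rw [neg_neg, zpow_one, zpow_neg_one]
    ring
  rw [hvalue]
  refine hsum.congr_fun fun i => ?_
  simp only [slitEntry_eq ht, Prod.mk_add_mk, add_zero, ← sub_eq_add_neg]
  push_cast
  ring

theorem eq_mul_of_bounded_recurrence {S : ℕ → ℂ} {κ Y K : ℝ} (hS : ∀ n, ‖S n‖ ≤ K)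
    (hY0 : 0 < Y) (hY1 : Y < 1) (hY : Y ^ 2 - κ * Y + 1 = 0)
    (h : ∀ n, S (n + 2) + S n = κ * S (n + 1)) : S 1 = Y * S 0 := by
  have hYc : (Y : ℂ) ^ 2 - κ * Y + 1 = 0 := by exact_mod_cast hY
  have hiter (n : ℕ) : S 1 - Y * S 0 = Y ^ n * (S (n + 1) - Y * S n) := by
    induction n with
    | zero => simp
    | succ n ih =>
      rw [ih]
      linear_combination (Y : ℂ) ^ n * (S (n + 1) * hYc - Y * h n)
  have hbound (n : ℕ) : ‖S 1 - Y * S 0‖ ≤ Y ^ n * (K + Y * K) := by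
    rw [hiter n, norm_mul, norm_pow, Complex.norm_real, Real.norm_of_nonneg hY0.le]
    gcongr
    refine (norm_sub_le _ _).trans (add_le_add (hS _) ?_)
    rw [norm_mul, Complex.norm_real, Real.norm_of_nonneg hY0.le]
    gcongr
    exact hS n
  have hlim : Tendsto (fun n : ℕ => Y ^ n * (K + Y * K)) atTop (𝓝 0) := by
    simpa using (tendsto_pow_atTop_nhds_zero_of_lt_one hY0.le hY1).mul_const (K + Y * K)
  exact sub_eq_zero.1 (norm_le_zero_iff.1 (ge_of_tendsto' hlim hbound))

theorem exists_root_mem_Ioo {κ : ℝ} (hκ : 2 < κ) :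
    ∃ Y ∈ Set.Ioo (0 : ℝ) 1, Y ^ 2 - κ * Y + 1 = 0 := by
  have hsq : Real.sqrt (κ ^ 2 - 4) ^ 2 = κ ^ 2 - 4 := Real.sq_sqrt (by nlinarith)
  have hnonneg := Real.sqrt_nonneg (κ ^ 2 - 4)
  refine ⟨(κ - Real.sqrt (κ ^ 2 - 4)) / 2, ⟨?_, ?_⟩, ?_⟩
  · nlinarith
  · nlinarith
  · linear_combination (1 / 4) * hsq

theorem exists_kappa (ht : t ∈ Set.Ioo 0 1) {x : ℂ} (hx : ‖x‖ = 1) :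
    ∃ κ : ℝ, 2 < κ ∧ (t : ℂ) / 4 * κ = 1 - t / 4 * (x + x⁻¹) := by
  have hre : x + x⁻¹ = ((2 * x.re : ℝ) : ℂ) := by
    rw [Complex.inv_def, Complex.normSq_eq_norm_sq, hx, one_pow, inv_one, Complex.ofReal_one,
      mul_one, Complex.add_conj]
  have hre1 : x.re ≤ 1 := hx ▸ Complex.re_le_norm x
  have ht0 : (t : ℂ) ≠ 0 := by exact_mod_cast ht.1.ne'
  refine ⟨4 / t - 2 * x.re, ?_, ?_⟩
  · have : 4 < 4 / t := by
      rw [lt_div_iff₀ ht.1]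
      linarith [ht.2]
    linarith
  · rw [hre]
    push_cast
    field_simp

theorem rowSum_add_one_add_rowSum_sub_one (ht : t ∈ Set.Ioo 0 1) {x : ℂ} (hx : ‖x‖ = 1) {κ : ℝ}
    (hκ : (t : ℂ) / 4 * κ = 1 - t / 4 * (x + x⁻¹)) {j : ℤ} (hj : j ≠ 0) :
    rowSum t x (j + 1) + rowSum t x (j - 1) = κ * rowSum t x j := by
  have ht' : t ∈ Set.Ico 0 1 := ⟨ht.1.le, ht.2⟩
  have ht0 : (t : ℂ) / 4 ≠ 0 := by exact_mod_cast (by linarith [ht.1] : t / 4 ≠ 0)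
  have hrow := hasSum_slitEntry_row ht' hx j
  have hoff (i : ℤ) : slitGreen t (i, j) = slitEntry t (i, j) :=
    slitGreen_eq_slitEntry ht' (by simp [mem_slitH, hj])
  simp only [← hoff] at hrow
  refine mul_left_cancel₀ ht0 ?_
  linear_combination hrow.unique (hasSum_rowSum ht' hx j) - rowSum t x j * hκ

theorem rowSum_units (ht : t ∈ Set.Ioo 0 1) {x : ℂ} (hx : ‖x‖ = 1) {κ Y : ℝ}
    (hκ : (t : ℂ) / 4 * κ = 1 - t / 4 * (x + x⁻¹)) (hY : Y ∈ Set.Ioo 0 1)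
    (hroot : Y ^ 2 - κ * Y + 1 = 0) (ε : ℤˣ) : rowSum t x ε = Y * rowSum t x 0 := by
  have h := eq_mul_of_bounded_recurrence (S := fun n => rowSum t x (ε * n))
    (fun n => norm_rowSum_le ⟨ht.1.le, ht.2⟩ hx _) hY.1 hY.2 hroot fun n => ?_
  · simpa using h
  have hj : (ε : ℤ) * (n + 1) ≠ 0 := mul_ne_zero ε.ne_zero (by omega)
  have hrec := rowSum_add_one_add_rowSum_sub_one ht hx hκ hj
  push_cast
  rcases Int.units_eq_one_or ε with rfl | rfl
  · rw [← hrec]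
    congr 2
    push_cast
    ring
  · rw [← hrec, add_comm]
    congr 2
    push_cast
    ring

/-- Summing the rows above and below the slit leaves a relation between the values on the axis
and the walks that enter the slit. -/
theorem sq_rowSum_zero (ht : t ∈ Set.Ioo 0 1) {x : ℂ} (hx : ‖x‖ = 1) :
    rowSum t x 0 ^ 2 * ((1 - t / 4 * (x + x⁻¹)) ^ 2 - (t / 2) ^ 2) =
      (rowSum t x 0 -
        t / 4 * ((x + x⁻¹) * rowSum t x 0 + rowSum t x 1 + rowSum t x (-1))) ^ 2 := by
  obtain ⟨κ, hκ2, hκ⟩ := exists_kappa ht hx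
  obtain ⟨Y, hY, hroot⟩ := exists_root_mem_Ioo hκ2
  have hup := rowSum_units ht hx hκ hY hroot 1
  have hdown := rowSum_units ht hx hκ hY hroot (-1)
  rw [Units.val_one] at hup
  rw [Units.val_neg, Units.val_one] at hdown
  have hroot' : (Y : ℂ) ^ 2 - κ * Y + 1 = 0 := by exact_mod_cast hroot
  have hright : rowSum t x 0 - t / 4 * ((x + x⁻¹) * rowSum t x 0 + rowSum t x 1 + rowSum t x (-1))
      = rowSum t x 0 * (t / 4 * (κ - 2 * Y)) := by
    rw [hup, hdown]
    linear_combination (-rowSum t x 0) * hκ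
  rw [hright, ← hκ]
  linear_combination (-rowSum t x 0 ^ 2 * t ^ 2 / 4) * hroot'

theorem hasCircleSum_axisGF (ht : t ∈ Set.Ico 0 1) :
    HasCircleSum (PowerSeries.mk fun n => (axisGF t n : ℂ)) fun x => rowSum t x 0 := by
  refine (hasCircleSum_iff_int (a := fun i => (slitGreen t (i, 0) : ℂ)) (fun n => ?_)
    fun i hi => ?_).2 ⟨?_, fun x hx => hasSum_rowSum ht hx 0⟩
  · simp [slitGreen, axisGF]
  · obtain ⟨n, rfl⟩ : ∃ n : ℕ, i = -((n + 1 : ℕ) : ℤ) := ⟨(-i - 1).toNat, by omega⟩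
    rw [slitGreen_neg_succ, Complex.ofReal_zero]
  · simpa using summable_norm_row ht norm_one 0

theorem hasCircleSum_slitGreen_sub_slitEntry (ht : t ∈ Set.Ico 0 1) :
    HasCircleSum
      (PowerSeries.mk fun n : ℕ => ((slitGreen t (-n, 0) - slitEntry t (-n, 0) : ℝ) : ℂ))
      fun x => rowSum t x⁻¹ 0 -
        t / 4 * ((x⁻¹ + x) * rowSum t x⁻¹ 0 + rowSum t x⁻¹ 1 + rowSum t x⁻¹ (-1)) := by
  refine (hasCircleSum_iff_int
    (a := fun i => ((slitGreen t (-i, 0) - slitEntry t (-i, 0) : ℝ) : ℂ))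
    (fun n => ?_) fun i hi => ?_).2 ⟨?_, fun x hx => ?_⟩
  · simp
  · rw [slitGreen_eq_slitEntry ht (by simpa [mem_slitH] using hi), sub_self, Complex.ofReal_zero]
  · have hinj : Function.Injective fun i : ℤ => (-i, (0 : ℤ)) := fun i j h => by simpa using h
    simp only [Complex.norm_real]
    exact (((summable_slitGreen ht).sub (summable_slitEntry ht)).comp_injective hinj).norm
  · have hx' : ‖x⁻¹‖ = 1 := by simp [hx]
    have h := (hasSum_rowSum ht hx' 0).sub (hasSum_slitEntry_row ht hx' 0)
    rw [inv_inv, zero_add, zero_sub] at h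
    refine ((Equiv.neg ℤ).hasSum_iff.2 h).congr_fun fun i => ?_
    simp [sub_mul]

open PowerSeries in
theorem sq_mk_axisGF (ht : t ∈ Set.Ioo 0 1) {u v cu cv : ℝ} (hu : |u| < 1) (hv : |v| < 1)
    (hcu : cu * (1 + u ^ 2) = 1 - t / 2) (hcu' : cu * u = t / 4)
    (hcv : cv * (1 + v ^ 2) = 1 + t / 2) (hcv' : cv * v = t / 4) :
    cu * cv = (1 - tipPassage t 0) ^ 2 ∧
      PowerSeries.mk (axisGF t) ^ 2 * ((1 - C u * X) * (1 - C v * X)) = 1 := by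
  have ht' : t ∈ Set.Ico 0 1 := ⟨ht.1.le, ht.2⟩
  have hc : (cu : ℂ) * cv ≠ 0 := by
    have h1 : cu * u ≠ 0 := by linarith [ht.1]
    have h2 : cv * v ≠ 0 := by linarith [ht.1]
    exact_mod_cast mul_ne_zero (left_ne_zero_of_mul h1) (left_ne_zero_of_mul h2)
  have hkernel (x : ℂ) (hx : ‖x‖ = 1) : (cu : ℂ) * cv *
      ((1 - u * x) * (1 - u * x⁻¹) * ((1 - v * x) * (1 - v * x⁻¹))) =
        (1 - t / 4 * (x + x⁻¹)) ^ 2 - (t / 2) ^ 2 := by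
    have hxx : x * x⁻¹ = 1 := mul_inv_cancel₀ (norm_ne_zero_iff.1 (by simp [hx]))
    have hfactor (c w σ : ℝ) (h : c * (1 + w ^ 2) = σ) (h' : c * w = t / 4) :
        (c : ℂ) * ((1 - w * x) * (1 - w * x⁻¹)) = σ - t / 4 * (x + x⁻¹) := by
      have hC : (c : ℂ) * (1 + w ^ 2) = σ := by exact_mod_cast h
      have hC' : (c : ℂ) * w = t / 4 := by exact_mod_cast h'
      linear_combination hC + (c : ℂ) * w ^ 2 * hxx - (x + x⁻¹) * hC'
    rw [mul_mul_mul_comm, hfactor cu u _ hcu hcu', hfactor cv v _ hcv hcv']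
    push_cast
    ring
  obtain ⟨hconst, hsq⟩ := wienerHopf_factorization (hasCircleSum_axisGF ht')
    (hasCircleSum_slitGreen_sub_slitEntry ht') (c := cu * cv) (u := u) (v := v) (by simpa using hu)
    (by simpa using hv) (fun x hx => by rw [hkernel x hx, sq_rowSum_zero ht hx, inv_inv])
    (by simp [axisGF_zero]) hc
  constructor
  · have h0 : slitGreen t 0 = 1 := axisGF_zero t
    rw [← slitEntry_zero]
    rw [← coeff_zero_eq_constantCoeff_apply, coeff_mk] at hconst
    simp only [Nat.cast_zero, neg_zero, Prod.mk_zero_zero, h0] at hconst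
    exact_mod_cast hconst
  · refine PowerSeries.map_injective Complex.ofRealHom Complex.ofReal_injective ?_
    have hmap : PowerSeries.map Complex.ofRealHom (PowerSeries.mk (axisGF t)) =
        PowerSeries.mk fun n => (axisGF t n : ℂ) := by
      ext n
      simp
    simpa [hmap] using hsq

end RowSums

section ClosedForm

/-- The coefficients of the power series `((1 - u X) (1 - v X)) ^ (-1/2)`. -/
noncomputable def invSqrtCoeff (u v : ℝ) : ℕ → ℝ
  | 0 => 1
  | 1 => (u + v) / 2
  | n + 2 => ((n + 3 / 2) * (u + v) * invSqrtCoeff u v (n + 1) -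
      (n + 1) * (u * v) * invSqrtCoeff u v n) / (n + 2)

open PowerSeries

/-- Differentiating `φ² (1 - u X) (1 - v X) = 1` gives a linear differential equation for `φ`. -/
theorem derivative_eq_of_sq_mul_eq_one {u v : ℝ} {φ : PowerSeries ℝ}
    (h : φ ^ 2 * ((1 - C u * X) * (1 - C v * X)) = 1) :
    C 2 * d⁄dX ℝ φ - C (2 * (u + v)) * (X * d⁄dX ℝ φ) + C (2 * (u * v)) * (X * (X * d⁄dX ℝ φ)) -
      C (u + v) * φ + C (2 * (u * v)) * (X * φ) = 0 := by
  have hφ : φ ≠ 0 := by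
    rintro rfl
    simp at h
  have hd := congrArg (d⁄dX ℝ) h
  simp only [Derivation.leibniz, Derivation.leibniz_pow, map_sub, derivative_one, derivative_C,
    derivative_X, smul_eq_mul] at hd
  refine (mul_eq_zero.1 ?_).resolve_left hφ
  rw [← hd]
  simp only [map_mul, map_add, map_ofNat, mul_one, mul_zero, add_zero, zero_sub, mul_neg,
    Nat.add_one_sub_one, pow_one, nsmul_eq_mul, Nat.cast_ofNat]
  ring

theorem eq_invSqrtCoeff {u v : ℝ} {a : ℕ → ℝ} (ha : a 0 = 1)
    (h : PowerSeries.mk a ^ 2 * ((1 - C u * X) * (1 - C v * X)) = 1) (n : ℕ) :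
    a n = invSqrtCoeff u v n := by
  have hode := derivative_eq_of_sq_mul_eq_one h
  have hX (n : ℕ) : coeff n (X * d⁄dX ℝ (PowerSeries.mk a)) = n * a n := by
    cases n with
    | zero => simp
    | succ n =>
      rw [coeff_succ_X_mul, coeff_derivative, coeff_mk]
      push_cast
      ring
  have hone : a 1 = (u + v) / 2 := by
    have h0 := congrArg (coeff 0) hode
    simp only [map_add (coeff _), map_sub (coeff _), coeff_C_mul, coeff_derivative, hX,
      coeff_zero_X_mul, coeff_mk, map_zero, ha, zero_add, Nat.cast_zero] at h0
    linarith
  have hrec (n : ℕ) : a (n + 2) =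
      ((n + 3 / 2) * (u + v) * a (n + 1) - (n + 1) * (u * v) * a n) / (n + 2) := by
    have hn := congrArg (coeff (n + 1)) hode
    simp only [map_add (coeff _), map_sub (coeff _), coeff_C_mul, coeff_derivative, hX,
      coeff_succ_X_mul, coeff_mk, map_zero] at hn
    push_cast at hn
    rw [eq_div_iff (by positivity)]
    linarith
  induction n using Nat.strong_induction_on with
  | _ n ih =>
    match n with
    | 0 => exact ha
    | 1 => exact hone
    | n + 2 => rw [hrec, invSqrtCoeff, ih (n + 1) (by omega), ih n (by omega)]

theorem sq_hasSum_mul_eq_one {u v s : ℝ} {a : ℕ → ℝ} (hs : HasSum a s)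
    (h : PowerSeries.mk a ^ 2 * ((1 - C u * X) * (1 - C v * X)) = 1) :
    s ^ 2 * ((1 - u) * (1 - v)) = 1 := by
  have ha : HasCircleSum (PowerSeries.mk a) fun x => ∑' n, a n * x ^ n := by
    refine ⟨by simpa using hs.summable.norm, fun x hx => ?_⟩
    simp only [coeff_mk]
    refine (Summable.of_norm ?_).hasSum
    simpa only [norm_mul, norm_pow, hx, one_pow, mul_one] using hs.summable.norm
  have hprod := (ha.mul ha).mul
    ((HasCircleSum.one_sub_C_mul_X u).mul (HasCircleSum.one_sub_C_mul_X v))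
  rw [← pow_two, h, ← map_one C] at hprod
  have hone := (hprod.hasSum 1 norm_one).unique ((HasCircleSum.const 1).hasSum 1 norm_one)
  simpa only [one_pow, mul_one, hs.tsum_eq, ← pow_two] using hone

/-- The Cayley transform `r ↦ (1 - r) / (1 + r)`: the roots of the kernel of the walk are
`cayley √(1 - t)` and `-cayley √(1 + t)`. -/
noncomputable def cayley (r : ℝ) : ℝ := (1 - r) / (1 + r)

theorem abs_cayley_lt_one {r : ℝ} (hr : 0 < r) : |cayley r| < 1 := by
  rw [cayley, abs_div, abs_of_pos (by linarith : 0 < 1 + r), div_lt_one (by linarith), abs_lt]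
  constructor <;> linarith

theorem sq_mul_cayley (r : ℝ) : (1 + r) ^ 2 / 4 * cayley r = (1 - r ^ 2) / 4 := by
  rw [cayley]
  field_simp
  ring

theorem sq_mul_one_add_cayley_sq {r : ℝ} (hr : 0 < r) :
    (1 + r) ^ 2 / 4 * (1 + cayley r ^ 2) = (1 + r ^ 2) / 2 := by
  have hr1 : 1 + r ≠ 0 := by positivity
  rw [cayley]
  field_simp
  ring

variable {t : ℝ}

theorem sq_mk_axisGF_cayley (ht : t ∈ Set.Ioo 0 1) :
    (1 + √(1 - t)) ^ 2 / 4 * ((1 + √(1 + t)) ^ 2 / 4) = (1 - tipPassage t 0) ^ 2 ∧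
      PowerSeries.mk (axisGF t) ^ 2 *
        ((1 - C (cayley √(1 - t)) * X) * (1 - C (-cayley √(1 + t)) * X)) = 1 := by
  have hr : 0 < √(1 - t) := Real.sqrt_pos.2 (by linarith [ht.2])
  have hρ : 0 < √(1 + t) := Real.sqrt_pos.2 (by linarith [ht.1])
  have hr2 : √(1 - t) ^ 2 = 1 - t := Real.sq_sqrt (by linarith [ht.2])
  have hρ2 : √(1 + t) ^ 2 = 1 + t := Real.sq_sqrt (by linarith [ht.1])
  refine sq_mk_axisGF ht (abs_cayley_lt_one hr) (by simpa using abs_cayley_lt_one hρ) ?_ ?_ ?_ ?_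
  · rw [sq_mul_one_add_cayley_sq hr, hr2]
    ring
  · rw [sq_mul_cayley, hr2]
    ring
  · rw [neg_sq, sq_mul_one_add_cayley_sq hρ, hρ2]
    ring
  · rw [mul_neg, sq_mul_cayley, hρ2]
    ring

theorem axisGF_eq_invSqrtCoeff (ht : t ∈ Set.Ioo 0 1) (n : ℕ) :
    axisGF t n = invSqrtCoeff (cayley √(1 - t)) (-cayley √(1 + t)) n :=
  eq_invSqrtCoeff (axisGF_zero t) (sq_mk_axisGF_cayley ht).2 n

theorem loopGF_eq (ht : t ∈ Set.Ioo 0 1) :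
    loopGF t = 4 / ((1 + √(1 - t)) * (1 + √(1 + t))) := by
  have hpos := loopGF_pos ⟨ht.1.le, ht.2⟩
  have hsq : (loopGF t * ((1 + √(1 - t)) * (1 + √(1 + t)) / 4)) ^ 2 = 1 := by
    calc _ = loopGF t ^ 2 * ((1 + √(1 - t)) ^ 2 / 4 * ((1 + √(1 + t)) ^ 2 / 4)) := by ring
      _ = (loopGF t * (1 - tipPassage t 0)) ^ 2 := by rw [(sq_mk_axisGF_cayley ht).1, mul_pow]
      _ = 1 := by rw [loopGF_mul_one_sub ⟨ht.1.le, ht.2⟩, one_pow]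
  have hone := (pow_eq_one_iff_of_nonneg (by positivity) two_ne_zero).1 hsq
  rw [eq_div_iff (by positivity)]
  linarith

theorem survivalGF_sq (ht : t ∈ Set.Ioo 0 1) :
    survivalGF t 0 ^ 2 * (√(1 - t) ^ 3 * loopGF t) = 1 := by
  have ht' : t ∈ Set.Ico 0 1 := ⟨ht.1.le, ht.2⟩
  have hr : 0 < √(1 - t) := Real.sqrt_pos.2 (by linarith [ht.2])
  have hr2 : √(1 - t) ^ 2 = 1 - t := Real.sq_sqrt (by linarith [ht.2])
  have hL := loopGF_pos ht'
  have hS := survivalGF_pos ht' 0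
  have hroots : (1 - cayley √(1 - t)) * (1 - -cayley √(1 + t)) = √(1 - t) * loopGF t := by
    rw [loopGF_eq ht, cayley, cayley]
    field_simp
    ring
  have hsum := sq_hasSum_mul_eq_one (hasSum_axisGF ht') (sq_mk_axisGF_cayley ht).2
  have hinv : (1 - t)⁻¹ = (√(1 - t) ^ 2)⁻¹ := by rw [hr2]
  rw [hroots, hinv] at hsum
  field_simp at hsum
  linarith

theorem rpow_mul_survivalGF (ht : t ∈ Set.Ioo 0 1) :
    (1 - t) ^ (3 / 4 : ℝ) * survivalGF t 0 = (√(loopGF t))⁻¹ := by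
  have ht' : t ∈ Set.Ico 0 1 := ⟨ht.1.le, ht.2⟩
  have ht1 : 0 ≤ 1 - t := by linarith [ht.2]
  have hpow : (1 - t) ^ (3 / 4 : ℝ) = √(√(1 - t) ^ 3) := by
    rw [Real.sqrt_eq_rpow, Real.sqrt_eq_rpow, ← Real.rpow_natCast, ← Real.rpow_mul ht1,
      ← Real.rpow_mul ht1]
    norm_num
  have hsqrt := congrArg Real.sqrt (survivalGF_sq ht)
  rw [Real.sqrt_one, Real.sqrt_mul (by positivity), Real.sqrt_sq (survivalGF_pos ht' 0).le,
    Real.sqrt_mul (by positivity)] at hsqrt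
  refine eq_inv_of_mul_eq_one_left ?_
  rw [hpow]
  linarith

theorem neg_cayley_sqrt_two : -cayley √2 = 3 - 2 * √2 := by
  have h2 : √2 ^ 2 = 2 := Real.sq_sqrt zero_le_two
  rw [cayley, ← neg_div, div_eq_iff (by positivity)]
  linear_combination 2 * h2

theorem differentiableAt_invSqrtCoeff_cayley (n : ℕ) :
    DifferentiableAt ℝ (fun r => invSqrtCoeff (cayley r) (-cayley √(2 - r ^ 2)) n) 0 := by
  have hcayley {r : ℝ} (hr : 0 ≤ r) : DifferentiableAt ℝ cayley r := by
    unfold cayley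
    exact DifferentiableAt.div (by fun_prop) (by fun_prop) (by positivity)
  have hsqrt : DifferentiableAt ℝ (fun r : ℝ => √(2 - r ^ 2)) 0 :=
    DifferentiableAt.sqrt (by fun_prop) (by norm_num)
  have hu := hcayley le_rfl
  have hv : DifferentiableAt ℝ (fun r : ℝ => cayley √(2 - r ^ 2)) 0 :=
    DifferentiableAt.comp (g := cayley) 0 (hcayley (Real.sqrt_nonneg _)) hsqrt
  induction n using Nat.strong_induction_on with
  | _ n ih =>
    match n with
    | 0 => exact differentiableAt_const _
    | 1 =>
      simp only [invSqrtCoeff]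
      fun_prop
    | n + 2 =>
      have h1 := ih (n + 1) (by omega)
      have h0 := ih n (by omega)
      simp only [invSqrtCoeff]
      fun_prop

theorem tendsto_sqrt_one_sub :
    Tendsto (fun t : ℝ => √(1 - t)) (𝓝[<] 1) (𝓝 0) := by
  have h : ContinuousAt (fun t : ℝ => √(1 - t)) 1 := by fun_prop
  simpa using h.tendsto.mono_left nhdsWithin_le_nhds

theorem eventually_mem_Ioo : ∀ᶠ t : ℝ in 𝓝[<] 1, t ∈ Set.Ioo (0 : ℝ) 1 :=
  Ioo_mem_nhdsLT one_pos

theorem isBigO_invSqrtCoeff_sub_axisGF (n : ℕ) :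
    (fun t => invSqrtCoeff 1 (3 - 2 * √2) n - axisGF t n) =O[𝓝[<] 1]
      fun t => √(1 - t) := by
  have h := (differentiableAt_invSqrtCoeff_cayley n).isBigO_sub.neg_left.comp_tendsto
    tendsto_sqrt_one_sub
  simp only [neg_sub, sub_zero] at h
  refine h.congr' ?_ EventuallyEq.rfl
  filter_upwards [eventually_mem_Ioo] with t ht
  have hρ : 2 - √(1 - t) ^ 2 = 1 + t := by
    rw [Real.sq_sqrt (by linarith [ht.2])]
    ring
  have h0 : cayley 0 = 1 := by simp [cayley]
  simp only [Function.comp_apply, hρ, h0, ne_eq, OfNat.ofNat_ne_zero, not_false_eq_true, zero_pow,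
    sub_zero, neg_cayley_sqrt_two, axisGF_eq_invSqrtCoeff ht]

theorem tendsto_axisGF (n : ℕ) : Tendsto (fun t => axisGF t n) (𝓝[<] 1)
    (𝓝 (invSqrtCoeff 1 (3 - 2 * √2) n)) := by
  simpa using ((isBigO_invSqrtCoeff_sub_axisGF n).trans_tendsto tendsto_sqrt_one_sub).const_sub
    (invSqrtCoeff 1 (3 - 2 * √2) n)

theorem tendsto_loopGF :
    Tendsto loopGF (𝓝[<] 1) (𝓝 (4 * (√2 - 1))) := by
  have h2 : √2 ^ 2 = 2 := Real.sq_sqrt zero_le_two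
  have hcont : ContinuousAt (fun t : ℝ => 4 / ((1 + √(1 - t)) * (1 + √(1 + t)))) 1 :=
    ContinuousAt.div (by fun_prop) (by fun_prop) (by positivity)
  have hvalue : 4 / ((1 + √(1 - 1)) * (1 + √(1 + 1))) = 4 * (√2 - 1) := by
    rw [sub_self, Real.sqrt_zero, add_zero, one_mul, one_add_one_eq_two,
      div_eq_iff (by positivity)]
    linear_combination (-4) * h2
  rw [← hvalue]
  refine (hcont.tendsto.mono_left nhdsWithin_le_nhds).congr' ?_
  filter_upwards [eventually_mem_Ioo] with t ht using (loopGF_eq ht).symm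

end ClosedForm

section AxisSums

theorem axisProb_nonneg (k n : ℕ) : 0 ≤ axisProb k n :=
  killedOp_pow_nonneg (single_one_nonneg _) n _

theorem hasSum_axisProb_mul_pow {t : ℝ} (ht : t ∈ Set.Ico 0 1) (k : ℕ) :
    HasSum (fun n => axisProb k n * t ^ n) (axisGF t k) := by
  have h : HasSum (fun n => t ^ n * axisProb k n) (axisGF t k) :=
    (summable_green ht (abs_single_one_le _) _).hasSum
  simpa only [mul_comm] using h

theorem summable_axisProb (k : ℕ) : Summable (axisProb k) := by
  refine summable_of_sum_range_le (axisProb_nonneg k) (c := invSqrtCoeff 1 (3 - 2 * √2) k)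
    fun n => ?_
  have hcont : ContinuousAt (fun t : ℝ => ∑ m ∈ Finset.range n, axisProb k m * t ^ m) 1 := by
    fun_prop
  have hlim := hcont.tendsto.mono_left (nhdsWithin_le_nhds (s := Set.Iio 1))
  simp only [one_pow, mul_one] at hlim
  refine le_of_tendsto_of_tendsto hlim (tendsto_axisGF k) ?_
  filter_upwards [eventually_mem_Ioo] with t ht
  exact sum_le_hasSum _ (fun m _ => mul_nonneg (axisProb_nonneg k m) (pow_nonneg ht.1.le m))
    (hasSum_axisProb_mul_pow ⟨ht.1.le, ht.2⟩ k)

theorem hasSum_axisProb (k : ℕ) : HasSum (axisProb k) (invSqrtCoeff 1 (3 - 2 * √2) k) := by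
  have habel := Real.tendsto_tsum_powerSeries_nhdsWithin_lt
    (summable_axisProb k).hasSum.tendsto_sum_nat
  have hlim : ∑' n, axisProb k n = invSqrtCoeff 1 (3 - 2 * √2) k := by
    refine tendsto_nhds_unique (habel.congr' ?_) (tendsto_axisGF k)
    filter_upwards [eventually_mem_Ioo] with t ht using
      (hasSum_axisProb_mul_pow ⟨ht.1.le, ht.2⟩ k).tsum_eq
  exact hlim ▸ (summable_axisProb k).hasSum

theorem slitCount_div_eq_axisProb (k n : ℕ) :
    (slitCount sqSteps k 0 n : ℝ) / 4 ^ n = axisProb k n := by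
  rw [slitCount_eq, mul_div_cancel_left₀ _ (by positivity)]

theorem sSum_eq_invSqrtCoeff (k : ℕ) : sSum k = invSqrtCoeff 1 (3 - 2 * √2) k := by
  simp only [sSum, slitCount_div_eq_axisProb]
  exact (hasSum_axisProb k).tsum_eq

theorem sSum_zero : sSum 0 = 1 := by rw [sSum_eq_invSqrtCoeff, invSqrtCoeff]

theorem sSum_one : sSum 1 = 2 - √2 := by
  rw [sSum_eq_invSqrtCoeff, invSqrtCoeff]
  ring

theorem sSum_two : sSum 2 = 5 * (3 - 2 * √2) / 2 := by
  have h2 : √2 ^ 2 = 2 := Real.sq_sqrt zero_le_two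
  simp only [sSum_eq_invSqrtCoeff, invSqrtCoeff, Nat.cast_zero]
  linear_combination (3 / 2) * h2

theorem sSum_nonneg (k : ℕ) : 0 ≤ sSum k := by
  rw [sSum_eq_invSqrtCoeff]
  exact (hasSum_axisProb k).nonneg (axisProb_nonneg k)

theorem sSum_succ_succ_sub (n : ℕ) : (n + 2) * (sSum (n + 2) - sSum (n + 1)) =
    (n + 1) * (3 - 2 * √2) * (sSum (n + 1) - sSum n) + sSum (n + 1) * (1 - √2) := by
  simp only [sSum_eq_invSqrtCoeff]
  rw [invSqrtCoeff]
  field_simp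
  ring

theorem antitone_sSum : Antitone sSum := by
  refine antitone_nat_of_succ_le fun n => ?_
  induction n with
  | zero =>
    rw [zero_add, sSum_zero, sSum_one]
    linarith [Real.one_lt_sqrt_two]
  | succ n ih =>
    have hv : 0 ≤ 3 - 2 * √2 := by nlinarith [Real.sq_sqrt zero_le_two, Real.sqrt_nonneg 2]
    have hfirst : (n + 1) * (3 - 2 * √2) * (sSum (n + 1) - sSum n) ≤ 0 :=
      mul_nonpos_of_nonneg_of_nonpos (by positivity) (sub_nonpos.2 ih)
    have hsecond : sSum (n + 1) * (1 - √2) ≤ 0 :=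
      mul_nonpos_of_nonneg_of_nonpos (sSum_nonneg _) (by linarith [Real.one_lt_sqrt_two])
    have hprod : (n + 2) * (sSum (n + 2) - sSum (n + 1)) ≤ 0 := by
      rw [sSum_succ_succ_sub]
      exact add_nonpos hfirst hsecond
    exact sub_nonpos.1 (nonpos_of_mul_nonpos_right hprod (by positivity))

theorem sum_sq_sSum_pos {k : ℕ} (hk : 1 ≤ k) : 0 < ∑ ℓ ∈ Finset.range k, sSum ℓ ^ 2 := by
  refine Finset.sum_pos' (fun _ _ => sq_nonneg _) ⟨0, Finset.mem_range.2 hk, ?_⟩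
  simp [sSum_zero]

theorem limVisitProb_lt_one {k : ℕ} (hk : 1 ≤ k) : limVisitProb k < 1 := by
  rw [limVisitProb, div_lt_one (sum_sq_sSum_pos hk), Finset.mul_sum]
  refine Finset.sum_lt_sum (fun ℓ hℓ => ?_) ⟨0, Finset.mem_range.2 hk, ?_⟩
  · rw [pow_two]
    exact mul_le_mul_of_nonneg_right (antitone_sSum (Finset.mem_range.1 hℓ).le) (sSum_nonneg ℓ)
  · have h1 := antitone_sSum hk
    rw [sSum_one] at h1
    rw [sSum_zero]
    linarith [Real.one_lt_sqrt_two]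

theorem limVisitProb_one : limVisitProb 1 = 2 - √2 := by
  simp [limVisitProb, sSum_zero, sSum_one]

theorem limVisitProb_two : limVisitProb 2 = 5 / 34 * (19 - 11 * √2) := by
  have h2 : √2 ^ 2 = 2 := Real.sq_sqrt zero_le_two
  have hpos : (0 : ℝ) < 1 ^ 2 + (2 - √2) ^ 2 := by positivity
  simp only [limVisitProb, Finset.sum_range_succ, Finset.sum_range_zero, zero_add, sSum_zero,
    sSum_one, sSum_two]
  rw [div_eq_iff hpos.ne']
  linear_combination (-(5 / 34) * (29 - 11 * √2)) * h2

theorem limVisitNum_one : limVisitNum 1 = 4 * (3 * √2 - 4) := by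
  have h2 : √2 ^ 2 = 2 := Real.sq_sqrt zero_le_two
  simp only [limVisitNum, Finset.sum_range_one, sSum_zero, sSum_one]
  linear_combination (-4) * h2

theorem limVisitNum_two : limVisitNum 2 = 10 * (22 * √2 - 31) := by
  have h2 : √2 ^ 2 = 2 := Real.sq_sqrt zero_le_two
  simp only [limVisitNum, Finset.sum_range_succ, Finset.sum_range_zero, zero_add, sSum_zero,
    sSum_one, sSum_two]
  linear_combination (20 * √2 - 110) * h2

end AxisSums

section Karamata

open MeasureTheory

/-- The Abel mean of order `β` of the weights `α` tested against `g`; Karamata's method lets `z`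
tend to `1` from below. -/
noncomputable def abelMean (α : ℕ → ℝ) (β : ℝ) (g : ℝ → ℝ) (z : ℝ) : ℝ :=
  (1 - z) ^ β * ∑' n, α n * z ^ n * g (z ^ n)

/-- The limit functional of Karamata's method, up to a factor `Real.Gamma β`. -/
noncomputable def gammaIntegral (β : ℝ) (g : ℝ → ℝ) : ℝ :=
  ∫ x in Set.Ioi 0, x ^ (β - 1) * Real.exp (-x) * g (Real.exp (-x))

variable {α : ℕ → ℝ} {β C z : ℝ} {f g : ℝ → ℝ}

theorem summable_abelMean (hz : z ∈ Set.Ico 0 1) (hs : Summable fun n => α n * z ^ n)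
    (hg : ContinuousOn g (Set.Icc 0 1)) : Summable fun n => α n * z ^ n * g (z ^ n) := by
  obtain ⟨K, hK⟩ := isCompact_Icc.exists_bound_of_continuousOn hg
  refine Summable.of_norm_bounded (hs.norm.mul_right K) fun n => ?_
  rw [norm_mul]
  exact mul_le_mul_of_nonneg_left
    (hK _ ⟨pow_nonneg hz.1 n, pow_le_one₀ hz.1 hz.2.le⟩) (norm_nonneg _)

theorem abelMean_add (hz : z ∈ Set.Ico 0 1) (hs : Summable fun n => α n * z ^ n)
    (hf : ContinuousOn f (Set.Icc 0 1)) (hg : ContinuousOn g (Set.Icc 0 1)) :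
    abelMean α β (fun y => f y + g y) z = abelMean α β f z + abelMean α β g z := by
  simp only [abelMean, mul_add]
  rw [(summable_abelMean hz hs hf).tsum_add (summable_abelMean hz hs hg), mul_add]

theorem abelMean_const_mul (c : ℝ) :
    abelMean α β (fun y => c * g y) z = c * abelMean α β g z := by
  simp only [abelMean, mul_left_comm _ c]
  rw [tsum_mul_left, mul_left_comm]

theorem abelMean_mono (hα : ∀ n, 0 ≤ α n) (hz : z ∈ Set.Ico 0 1)
    (hs : Summable fun n => α n * z ^ n) (hf : ContinuousOn f (Set.Icc 0 1))
    (hg : ContinuousOn g (Set.Icc 0 1)) (hfg : ∀ y ∈ Set.Icc 0 1, f y ≤ g y) :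
    abelMean α β f z ≤ abelMean α β g z := by
  refine mul_le_mul_of_nonneg_left ((summable_abelMean hz hs hf).tsum_le_tsum (fun n => ?_)
    (summable_abelMean hz hs hg)) (Real.rpow_nonneg (sub_nonneg.2 hz.2.le) β)
  exact mul_le_mul_of_nonneg_left (hfg _ ⟨pow_nonneg hz.1 n, pow_le_one₀ hz.1 hz.2.le⟩)
    (mul_nonneg (hα n) (pow_nonneg hz.1 n))

theorem exp_neg_mem_Icc {x : ℝ} (hx : x ∈ Set.Ioi 0) : Real.exp (-x) ∈ Set.Icc 0 1 :=
  ⟨(Real.exp_pos _).le, Real.exp_le_one_iff.2 (neg_nonpos.2 (le_of_lt hx))⟩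

theorem integrableOn_gammaIntegral (hβ : 0 < β) (hg : ContinuousOn g (Set.Icc 0 1)) :
    IntegrableOn (fun x => x ^ (β - 1) * Real.exp (-x) * g (Real.exp (-x))) (Set.Ioi 0) := by
  obtain ⟨K, hK⟩ := isCompact_Icc.exists_bound_of_continuousOn hg
  have hcont : ContinuousOn (fun x => g (Real.exp (-x))) (Set.Ioi 0) :=
    hg.comp (by fun_prop) fun x hx => exp_neg_mem_Icc hx
  have hΓ := Real.GammaIntegral_convergent hβ
  simp only [mul_comm (Real.exp _)] at hΓ
  refine hΓ.mul_bdd (c := K) (hcont.aestronglyMeasurable measurableSet_Ioi) ?_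
  filter_upwards [ae_restrict_mem measurableSet_Ioi] with x hx using hK _ (exp_neg_mem_Icc hx)

theorem gammaIntegral_add (hβ : 0 < β) (hf : ContinuousOn f (Set.Icc 0 1))
    (hg : ContinuousOn g (Set.Icc 0 1)) :
    gammaIntegral β (fun y => f y + g y) = gammaIntegral β f + gammaIntegral β g := by
  simp only [gammaIntegral, mul_add]
  exact integral_add (integrableOn_gammaIntegral hβ hf) (integrableOn_gammaIntegral hβ hg)

theorem gammaIntegral_const_mul (c : ℝ) :
    gammaIntegral β (fun y => c * g y) = c * gammaIntegral β g := by
  simp only [gammaIntegral, mul_left_comm _ c]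
  exact integral_const_mul _ _

theorem gammaIntegral_mono (hβ : 0 < β) (hf : ContinuousOn f (Set.Icc 0 1))
    (hg : ContinuousOn g (Set.Icc 0 1)) (hfg : ∀ y ∈ Set.Icc 0 1, f y ≤ g y) :
    gammaIntegral β f ≤ gammaIntegral β g :=
  setIntegral_mono_on (integrableOn_gammaIntegral hβ hf) (integrableOn_gammaIntegral hβ hg)
    measurableSet_Ioi fun _ hx => mul_le_mul_of_nonneg_left (hfg _ (exp_neg_mem_Icc hx))
      (mul_nonneg (Real.rpow_nonneg (le_of_lt hx) _) (Real.exp_pos _).le)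

theorem gammaIntegral_pow (hβ : 0 < β) (k : ℕ) :
    gammaIntegral β (fun y => y ^ k) = (1 / (k + 1 : ℝ)) ^ β * Real.Gamma β := by
  rw [← Real.integral_rpow_mul_exp_neg_mul_Ioi hβ (by positivity : (0 : ℝ) < k + 1), gammaIntegral]
  refine integral_congr_ae (Eventually.of_forall fun x => ?_)
  simp only [← Real.exp_nat_mul, mul_assoc, ← Real.exp_add]
  ring_nf

theorem gammaIntegral_const (hβ : 0 < β) (c : ℝ) :
    gammaIntegral β (fun _ => c) = c * Real.Gamma β := by
  have h : gammaIntegral β (fun _ => 1) = Real.Gamma β := by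
    simpa using gammaIntegral_pow hβ 0
  simpa [h] using gammaIntegral_const_mul (β := β) (g := fun _ => 1) c

theorem one_sub_div_one_sub_pow {k : ℕ} (hz : z ∈ Set.Ioo 0 1) :
    (1 - z) / (1 - z ^ (k + 1)) = (∑ i ∈ Finset.range (k + 1), z ^ i)⁻¹ := by
  have hz1 : 1 - z ≠ 0 := sub_ne_zero.2 hz.2.ne'
  rw [← mul_neg_geom_sum, ← div_div, div_self hz1, one_div]

theorem abelMean_pow (hz : z ∈ Set.Ioo 0 1) (k : ℕ) :
    abelMean α β (fun y => y ^ k) z = ((∑ i ∈ Finset.range (k + 1), z ^ i)⁻¹) ^ β *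
      ((1 - z ^ (k + 1)) ^ β * ∑' n, α n * (z ^ (k + 1)) ^ n) := by
  have hz1 : 0 < 1 - z := sub_pos.2 hz.2
  have hw : 0 < 1 - z ^ (k + 1) := sub_pos.2 (pow_lt_one₀ hz.1.le hz.2 k.succ_ne_zero)
  rw [abelMean, ← mul_assoc, ← one_sub_div_one_sub_pow hz,
    Real.div_rpow hz1.le hw.le, div_mul_cancel₀ _ (Real.rpow_pos_of_pos hw β).ne']
  congr 2 with n
  ring

theorem tendsto_pow_nhdsLT_one (k : ℕ) :
    Tendsto (fun z : ℝ => z ^ (k + 1)) (𝓝[<] 1) (𝓝[<] 1) := by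
  refine tendsto_nhdsWithin_iff.2 ⟨?_, ?_⟩
  · have h : ContinuousAt (fun z : ℝ => z ^ (k + 1)) 1 := by fun_prop
    simpa using h.tendsto.mono_left nhdsWithin_le_nhds
  · filter_upwards [eventually_mem_Ioo] with z hz using pow_lt_one₀ hz.1.le hz.2 k.succ_ne_zero

theorem tendsto_abelMean_pow (hβ : 0 < β)
    (h : Tendsto (fun z => (1 - z) ^ β * ∑' n, α n * z ^ n) (𝓝[<] 1) (𝓝 C)) (k : ℕ) :
    Tendsto (abelMean α β fun y => y ^ k) (𝓝[<] 1)
      (𝓝 (C / Real.Gamma β * gammaIntegral β fun y => y ^ k)) := by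
  have hgeom : Tendsto (fun z : ℝ => ((∑ i ∈ Finset.range (k + 1), z ^ i)⁻¹) ^ β) (𝓝[<] 1)
      (𝓝 ((1 / (k + 1 : ℝ)) ^ β)) := by
    have hsum : ContinuousAt (fun z : ℝ => ∑ i ∈ Finset.range (k + 1), z ^ i) 1 := by fun_prop
    have hne : ∑ i ∈ Finset.range (k + 1), (1 : ℝ) ^ i ≠ 0 :=
      (Finset.sum_pos (fun i _ => by positivity) (by simp)).ne'
    have hinv := (hsum.inv₀ hne).rpow_const (p := β) (Or.inr hβ.le)
    simpa using hinv.tendsto.mono_left nhdsWithin_le_nhds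
  have hlim : C / Real.Gamma β * gammaIntegral β (fun y => y ^ k) = (1 / (k + 1 : ℝ)) ^ β * C := by
    have hΓ := (Real.Gamma_pos_of_pos hβ).ne'
    rw [gammaIntegral_pow hβ]
    field_simp
  rw [hlim]
  refine (hgeom.mul (h.comp (tendsto_pow_nhdsLT_one k))).congr' ?_
  filter_upwards [eventually_mem_Ioo] with z hz using (abelMean_pow hz k).symm

theorem tendsto_abelMean_eval (hβ : 0 < β)
    (hs : ∀ z ∈ Set.Ico (0 : ℝ) 1, Summable fun n => α n * z ^ n)
    (h : Tendsto (fun z => (1 - z) ^ β * ∑' n, α n * z ^ n) (𝓝[<] 1) (𝓝 C)) (p : Polynomial ℝ) :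
    Tendsto (abelMean α β fun y => p.eval y) (𝓝[<] 1)
      (𝓝 (C / Real.Gamma β * gammaIntegral β fun y => p.eval y)) := by
  induction p using Polynomial.induction_on' with
  | add p q hp hq =>
    simp only [Polynomial.eval_add]
    rw [gammaIntegral_add hβ p.continuousOn q.continuousOn, mul_add]
    refine (hp.add hq).congr' ?_
    filter_upwards [eventually_mem_Ioo] with z hz
    exact (abelMean_add ⟨hz.1.le, hz.2⟩ (hs z ⟨hz.1.le, hz.2⟩) p.continuousOn q.continuousOn).symm
  | monomial k c =>
    simp only [Polynomial.eval_monomial]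
    rw [gammaIntegral_const_mul, mul_left_comm]
    exact ((tendsto_abelMean_pow hβ h k).const_mul c).congr fun z => (abelMean_const_mul c).symm

theorem nonneg_of_tendsto_mul_tsum (hα : ∀ n, 0 ≤ α n)
    (h : Tendsto (fun z => (1 - z) ^ β * ∑' n, α n * z ^ n) (𝓝[<] 1) (𝓝 C)) : 0 ≤ C := by
  refine ge_of_tendsto h ?_
  filter_upwards [eventually_mem_Ioo] with z hz
  exact mul_nonneg (Real.rpow_nonneg (sub_nonneg.2 hz.2.le) β)
    (tsum_nonneg fun n => mul_nonneg (hα n) (pow_nonneg hz.1.le n))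

theorem exists_polynomial_between (hg : ContinuousOn g (Set.Icc 0 1)) {δ : ℝ} (hδ : 0 < δ) :
    ∃ p : Polynomial ℝ, ∀ y ∈ Set.Icc 0 1, g y ≤ p.eval y ∧ p.eval y ≤ g y + 2 * δ := by
  obtain ⟨p, hp⟩ := exists_polynomial_near_of_continuousOn 0 1 (fun y => g y + δ)
    (hg.add continuousOn_const) δ hδ
  refine ⟨p, fun y hy => ?_⟩
  have h := abs_lt.1 (hp y hy)
  constructor <;> linarith

theorem eventually_abelMean_lt (hβ : 0 < β) (hα : ∀ n, 0 ≤ α n)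
    (hs : ∀ z ∈ Set.Ico (0 : ℝ) 1, Summable fun n => α n * z ^ n)
    (h : Tendsto (fun z => (1 - z) ^ β * ∑' n, α n * z ^ n) (𝓝[<] 1) (𝓝 C))
    (hg : ContinuousOn g (Set.Icc 0 1)) {b : ℝ} (hb : C / Real.Gamma β * gammaIntegral β g < b) :
    ∀ᶠ z in 𝓝[<] 1, abelMean α β g z < b := by
  have hΓ := Real.Gamma_pos_of_pos hβ
  have hC := nonneg_of_tendsto_mul_tsum hα h
  have hcont : ContinuousAt (fun δ => C / Real.Gamma β * (gammaIntegral β g + 2 * δ *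
      Real.Gamma β)) 0 := by fun_prop
  have hδ : ∀ᶠ δ in 𝓝[>] (0 : ℝ), C / Real.Gamma β * (gammaIntegral β g + 2 * δ *
      Real.Gamma β) < b :=
    (hcont.tendsto.eventually_lt_const (by simpa using hb)).filter_mono nhdsWithin_le_nhds
  obtain ⟨δ, hδb, hδ0⟩ := (hδ.and self_mem_nhdsWithin).exists
  obtain ⟨p, hp⟩ := exists_polynomial_between hg hδ0
  have hint : gammaIntegral β (fun y => p.eval y) ≤ gammaIntegral β g + 2 * δ * Real.Gamma β := by
    rw [← gammaIntegral_const hβ, ← gammaIntegral_add hβ hg continuousOn_const]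
    exact gammaIntegral_mono hβ p.continuousOn (hg.add continuousOn_const) fun y hy => (hp y hy).2
  have hlt := (mul_le_mul_of_nonneg_left hint (div_nonneg hC hΓ.le)).trans_lt hδb
  filter_upwards [(tendsto_abelMean_eval hβ hs h p).eventually_lt_const hlt, eventually_mem_Ioo]
    with z hzb hz
  exact (abelMean_mono hα ⟨hz.1.le, hz.2⟩ (hs z ⟨hz.1.le, hz.2⟩) hg p.continuousOn
    fun y hy => (hp y hy).1).trans_lt hzb

theorem tendsto_abelMean (hβ : 0 < β) (hα : ∀ n, 0 ≤ α n)
    (hs : ∀ z ∈ Set.Ico (0 : ℝ) 1, Summable fun n => α n * z ^ n)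
    (h : Tendsto (fun z => (1 - z) ^ β * ∑' n, α n * z ^ n) (𝓝[<] 1) (𝓝 C))
    (hg : ContinuousOn g (Set.Icc 0 1)) :
    Tendsto (abelMean α β g) (𝓝[<] 1) (𝓝 (C / Real.Gamma β * gammaIntegral β g)) := by
  refine tendsto_order.2 ⟨fun a ha => ?_, fun b hb => eventually_abelMean_lt hβ hα hs h hg hb⟩
  have hneg : C / Real.Gamma β * gammaIntegral β (fun y => -1 * g y) < -a := by
    rw [gammaIntegral_const_mul]
    linarith
  filter_upwards [eventually_abelMean_lt hβ hα hs h (continuousOn_const.mul hg) hneg] with z hz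
  have hz' : abelMean α β (fun y => -1 * g y) z < -a := hz
  rw [abelMean_const_mul] at hz'
  linarith

end Karamata

section TauberianTheorem

open MeasureTheory

/-- A continuous bump function with support `(e^{-q}, e^{-p})`. -/
noncomputable def expBump (p q y : ℝ) : ℝ :=
  max 0 (min (y - Real.exp (-q)) (Real.exp (-p) - y))

variable {α α' : ℕ → ℝ} {β C p q z : ℝ} {g : ℝ → ℝ}

theorem continuousOn_expBump (p q : ℝ) : ContinuousOn (expBump p q) (Set.Icc 0 1) := by
  unfold expBump
  fun_prop

theorem expBump_nonneg (p q y : ℝ) : 0 ≤ expBump p q y := le_max_left _ _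

theorem expBump_exp_neg_ne_zero_iff {x : ℝ} :
    expBump p q (Real.exp (-x)) ≠ 0 ↔ x ∈ Set.Ioo p q := by
  rw [← (expBump_nonneg p q _).lt_iff_ne', expBump, lt_max_iff, lt_min_iff]
  simp [and_comm]

theorem gammaIntegral_one_expBump_pos (hp : 0 ≤ p) (hpq : p < q) :
    0 < gammaIntegral 1 (expBump p q) := by
  have hint := integrableOn_gammaIntegral one_pos (continuousOn_expBump p q)
  refine (setIntegral_pos_iff_support_of_nonneg_ae (Eventually.of_forall fun x => ?_) hint).2 ?_
  · simp only [sub_self, Real.rpow_zero, one_mul]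
    exact mul_nonneg (Real.exp_pos _).le (expBump_nonneg p q _)
  · refine (Measure.measure_Ioo_pos volume).2 hpq |>.trans_le (measure_mono fun x hx => ?_)
    refine ⟨?_, hp.trans_lt hx.1⟩
    simpa using expBump_exp_neg_ne_zero_iff.2 hx

theorem rpow_mul_gammaIntegral_one_le (hβ : 0 < β) (hβ1 : β ≤ 1) (p q : ℝ) :
    q ^ (β - 1) * gammaIntegral 1 (expBump p q) ≤ gammaIntegral β (expBump p q) := by
  have hg := continuousOn_expBump p q
  rw [gammaIntegral, ← integral_const_mul]
  refine setIntegral_mono_on ((integrableOn_gammaIntegral one_pos hg).const_mul _)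
    (integrableOn_gammaIntegral hβ hg) measurableSet_Ioi fun x hx => ?_
  by_cases hb : expBump p q (Real.exp (-x)) = 0
  · simp [hb]
  · have hxq := (expBump_exp_neg_ne_zero_iff.1 hb).2
    simp only [sub_self, Real.rpow_zero, one_mul, ← mul_assoc]
    gcongr ?_ * _ * _
    · exact expBump_nonneg p q _
    · exact Real.rpow_le_rpow_of_nonpos hx hxq.le (sub_nonpos.2 hβ1)

theorem gammaIntegral_le_rpow_mul (hβ : 0 < β) (hβ1 : β ≤ 1) (hp : 0 < p) (q : ℝ) :
    gammaIntegral β (expBump p q) ≤ p ^ (β - 1) * gammaIntegral 1 (expBump p q) := by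
  have hg := continuousOn_expBump p q
  rw [gammaIntegral, gammaIntegral, ← integral_const_mul]
  refine setIntegral_mono_on (integrableOn_gammaIntegral hβ hg)
    ((integrableOn_gammaIntegral one_pos hg).const_mul _) measurableSet_Ioi fun x _ => ?_
  by_cases hb : expBump p q (Real.exp (-x)) = 0
  · simp [hb]
  · have hpx := (expBump_exp_neg_ne_zero_iff.1 hb).1
    simp only [sub_self, Real.rpow_zero, one_mul, ← mul_assoc]
    gcongr ?_ * _ * _
    · exact expBump_nonneg p q _
    · exact Real.rpow_le_rpow_of_nonpos hp hpx.le (sub_nonpos.2 hβ1)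

theorem abelMean_le_abelMean (hz : z ∈ Set.Ico 0 1) (hs : Summable fun n => α n * z ^ n)
    (hs' : Summable fun n => α' n * z ^ n) (hg : ContinuousOn g (Set.Icc 0 1))
    (hg0 : ∀ y, 0 ≤ g y) (h : ∀ n, g (z ^ n) ≠ 0 → α n ≤ α' n) :
    abelMean α β g z ≤ abelMean α' β g z := by
  refine mul_le_mul_of_nonneg_left ((summable_abelMean hz hs hg).tsum_le_tsum (fun n => ?_)
    (summable_abelMean hz hs' hg)) (Real.rpow_nonneg (sub_nonneg.2 hz.2.le) β)
  by_cases hn : g (z ^ n) = 0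
  · simp [hn]
  · exact mul_le_mul_of_nonneg_right
      (mul_le_mul_of_nonneg_right (h n hn) (pow_nonneg hz.1 n)) (hg0 _)

theorem abelMean_const (hz : z ∈ Set.Ico 0 1) (c : ℝ) :
    abelMean (fun _ => c) β g z = c * (1 - z) ^ (β - 1) * abelMean (fun _ => 1) 1 g z := by
  have hz1 : 1 - z ≠ 0 := sub_ne_zero.2 hz.2.ne'
  simp only [abelMean, mul_assoc c, one_mul, Real.rpow_one]
  rw [tsum_mul_left, Real.rpow_sub_one hz1]
  field_simp

theorem summable_const_mul_pow (c : ℝ) (hz : z ∈ Set.Ico 0 1) : Summable fun n => c * z ^ n :=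
  (summable_geometric_of_lt_one hz.1 hz.2).mul_left c

theorem summable_mul_pow_of_antitone (hα : Antitone α) (h0 : ∀ n, 0 ≤ α n)
    (hz : z ∈ Set.Ico 0 1) : Summable fun n => α n * z ^ n :=
  (summable_const_mul_pow (α 0) hz).of_nonneg_of_le
    (fun n => mul_nonneg (h0 n) (pow_nonneg hz.1 n))
    fun n => mul_le_mul_of_nonneg_right (hα n.zero_le) (pow_nonneg hz.1 n)

theorem tendsto_abelMean_one_one (hg : ContinuousOn g (Set.Icc 0 1)) :
    Tendsto (abelMean (fun _ => 1) 1 g) (𝓝[<] 1) (𝓝 (gammaIntegral 1 g)) := by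
  have hgeom : Tendsto (fun z : ℝ => (1 - z) ^ (1 : ℝ) * ∑' n : ℕ, 1 * z ^ n) (𝓝[<] 1) (𝓝 1) := by
    refine tendsto_const_nhds.congr' ?_
    filter_upwards [eventually_mem_Ioo] with z hz
    simp only [one_mul, Real.rpow_one]
    rw [tsum_geometric_of_lt_one hz.1.le hz.2, mul_inv_cancel₀ (sub_ne_zero.2 hz.2.ne')]
  simpa using tendsto_abelMean one_pos (fun _ => zero_le_one)
    (fun z hz => summable_const_mul_pow 1 hz) hgeom hg

theorem exp_neg_inv_mem_Ico {N : ℕ} (hN : N ≠ 0) : Real.exp (-(N : ℝ)⁻¹) ∈ Set.Ico 0 1 :=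
  ⟨(Real.exp_pos _).le, Real.exp_lt_one_iff.2 <| neg_lt_zero.2 <| by positivity⟩

theorem exp_neg_inv_pow (N n : ℕ) : Real.exp (-(N : ℝ)⁻¹) ^ n = Real.exp (-((n : ℝ) / N)) := by
  rw [← Real.exp_nat_mul]
  ring_nf

theorem abelMean_expBump_le (hα : Antitone α) (h0 : ∀ n, 0 ≤ α n) {N : ℕ} (hN : N ≠ 0) (q : ℝ) :
    abelMean α β (expBump 1 q) (Real.exp (-(N : ℝ)⁻¹)) ≤
      α N * (1 - Real.exp (-(N : ℝ)⁻¹)) ^ (β - 1) *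
        abelMean (fun _ => 1) 1 (expBump 1 q) (Real.exp (-(N : ℝ)⁻¹)) := by
  have hz := exp_neg_inv_mem_Ico hN
  rw [← abelMean_const hz]
  refine abelMean_le_abelMean hz (summable_mul_pow_of_antitone hα h0 hz)
    (summable_const_mul_pow _ hz) (continuousOn_expBump 1 q) (expBump_nonneg 1 q) fun n hn => ?_
  rw [exp_neg_inv_pow, expBump_exp_neg_ne_zero_iff] at hn
  have h := (one_lt_div (by positivity)).1 hn.1
  exact hα (by exact_mod_cast h.le)

theorem le_abelMean_expBump (hα : Antitone α) (h0 : ∀ n, 0 ≤ α n) {N : ℕ} (hN : N ≠ 0) (p : ℝ) :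
    α N * (1 - Real.exp (-(N : ℝ)⁻¹)) ^ (β - 1) *
        abelMean (fun _ => 1) 1 (expBump p 1) (Real.exp (-(N : ℝ)⁻¹)) ≤
      abelMean α β (expBump p 1) (Real.exp (-(N : ℝ)⁻¹)) := by
  have hz := exp_neg_inv_mem_Ico hN
  rw [← abelMean_const hz]
  refine abelMean_le_abelMean hz (summable_const_mul_pow _ hz)
    (summable_mul_pow_of_antitone hα h0 hz) (continuousOn_expBump p 1) (expBump_nonneg p 1)
    fun n hn => ?_
  rw [exp_neg_inv_pow, expBump_exp_neg_ne_zero_iff] at hn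
  have h := (div_lt_one (by positivity)).1 hn.2
  exact hα (by exact_mod_cast h.le)

theorem tendsto_neg_inv_natCast : Tendsto (fun N : ℕ => -(N : ℝ)⁻¹) atTop (𝓝[<] 0) := by
  refine tendsto_nhdsWithin_iff.2 ⟨?_, ?_⟩
  · simpa using (tendsto_inv_atTop_nhds_zero_nat (𝕜 := ℝ)).neg
  · filter_upwards [eventually_ne_atTop 0] with N hN
    exact neg_lt_zero.2 (by positivity : 0 < (N : ℝ)⁻¹)

theorem tendsto_exp_neg_inv : Tendsto (fun N : ℕ => Real.exp (-(N : ℝ)⁻¹)) atTop (𝓝[<] 1) := by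
  refine tendsto_nhdsWithin_iff.2 ⟨?_, ?_⟩
  · simpa using (tendsto_neg_inv_natCast.mono_right nhdsWithin_le_nhds).rexp
  · filter_upwards [eventually_ne_atTop 0] with N hN using (exp_neg_inv_mem_Ico hN).2

theorem tendsto_mul_one_sub_exp_neg_inv :
    Tendsto (fun N : ℕ => (N : ℝ) * (1 - Real.exp (-(N : ℝ)⁻¹))) atTop (𝓝 1) := by
  have hslope := (Real.hasDerivAt_exp 0).tendsto_slope_zero_left.comp tendsto_neg_inv_natCast
  simp only [Real.exp_zero] at hslope
  refine hslope.congr fun N => ?_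
  simp only [Function.comp_apply, zero_add, smul_eq_mul, inv_neg, inv_inv]
  ring

theorem tendsto_abelMean_div (hβ : 0 < β) (hα : Antitone α) (h0 : ∀ n, 0 ≤ α n)
    (h : Tendsto (fun z => (1 - z) ^ β * ∑' n, α n * z ^ n) (𝓝[<] 1) (𝓝 C))
    (hg : ContinuousOn g (Set.Icc 0 1)) (hg1 : gammaIntegral 1 g ≠ 0) :
    Tendsto (fun z => abelMean α β g z / abelMean (fun _ => 1) 1 g z) (𝓝[<] 1)
      (𝓝 (C / Real.Gamma β * (gammaIntegral β g / gammaIntegral 1 g))) := by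
  rw [← mul_div_assoc]
  exact (tendsto_abelMean hβ h0 (fun z hz => summable_mul_pow_of_antitone hα h0 hz) h hg).div
    (tendsto_abelMean_one_one hg) hg1

theorem eventually_lt_mul_rpow (hβ : 0 < β) (hβ1 : β ≤ 1) (hα : Antitone α) (h0 : ∀ n, 0 ≤ α n)
    (hC : 0 ≤ C) (h : Tendsto (fun z => (1 - z) ^ β * ∑' n, α n * z ^ n) (𝓝[<] 1) (𝓝 C))
    {a : ℝ} (ha : a < C / Real.Gamma β) :
    ∀ᶠ N : ℕ in atTop, a < α N * (1 - Real.exp (-(N : ℝ)⁻¹)) ^ (β - 1) := by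
  have hcont : ContinuousAt (fun q : ℝ => C / Real.Gamma β * q ^ (β - 1)) 1 :=
    continuousAt_const.mul (continuousAt_id.rpow_const (Or.inl one_ne_zero))
  have hev : ∀ᶠ q : ℝ in 𝓝[>] 1, a < C / Real.Gamma β * q ^ (β - 1) :=
    (hcont.tendsto.eventually_const_lt (by simpa using ha)).filter_mono nhdsWithin_le_nhds
  obtain ⟨q, hq, hq1⟩ := (hev.and self_mem_nhdsWithin).exists
  have hpos := gammaIntegral_one_expBump_pos zero_le_one hq1
  have hlt : a < C / Real.Gamma β *
      (gammaIntegral β (expBump 1 q) / gammaIntegral 1 (expBump 1 q)) :=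
    hq.trans_le (mul_le_mul_of_nonneg_left
      ((le_div_iff₀ hpos).2 (rpow_mul_gammaIntegral_one_le hβ hβ1 1 q))
      (div_nonneg hC (Real.Gamma_pos_of_pos hβ).le))
  have hbump := continuousOn_expBump 1 q
  filter_upwards [tendsto_exp_neg_inv.eventually
      ((tendsto_abelMean_div hβ hα h0 h hbump hpos.ne').eventually_const_lt hlt),
    tendsto_exp_neg_inv.eventually ((tendsto_abelMean_one_one hbump).eventually_const_lt hpos),
    eventually_ne_atTop 0] with N hN hN1 hN0
  exact hN.trans_le ((div_le_iff₀ hN1).2 (abelMean_expBump_le hα h0 hN0 q))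

theorem eventually_mul_rpow_lt (hβ : 0 < β) (hβ1 : β ≤ 1) (hα : Antitone α) (h0 : ∀ n, 0 ≤ α n)
    (hC : 0 ≤ C) (h : Tendsto (fun z => (1 - z) ^ β * ∑' n, α n * z ^ n) (𝓝[<] 1) (𝓝 C))
    {b : ℝ} (hb : C / Real.Gamma β < b) :
    ∀ᶠ N : ℕ in atTop, α N * (1 - Real.exp (-(N : ℝ)⁻¹)) ^ (β - 1) < b := by
  have hcont : ContinuousAt (fun p : ℝ => C / Real.Gamma β * p ^ (β - 1)) 1 :=
    continuousAt_const.mul (continuousAt_id.rpow_const (Or.inl one_ne_zero))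
  have hev : ∀ᶠ p : ℝ in 𝓝[<] 1, C / Real.Gamma β * p ^ (β - 1) < b :=
    (hcont.tendsto.eventually_lt_const (by simpa using hb)).filter_mono nhdsWithin_le_nhds
  obtain ⟨p, hp, hp01⟩ := (hev.and eventually_mem_Ioo).exists
  have hpos := gammaIntegral_one_expBump_pos hp01.1.le hp01.2
  have hlt : C / Real.Gamma β *
      (gammaIntegral β (expBump p 1) / gammaIntegral 1 (expBump p 1)) < b :=
    (mul_le_mul_of_nonneg_left
      ((div_le_iff₀ hpos).2 (gammaIntegral_le_rpow_mul hβ hβ1 hp01.1 1))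
      (div_nonneg hC (Real.Gamma_pos_of_pos hβ).le)).trans_lt hp
  have hbump := continuousOn_expBump p 1
  filter_upwards [tendsto_exp_neg_inv.eventually
      ((tendsto_abelMean_div hβ hα h0 h hbump hpos.ne').eventually_lt_const hlt),
    tendsto_exp_neg_inv.eventually ((tendsto_abelMean_one_one hbump).eventually_const_lt hpos),
    eventually_ne_atTop 0] with N hN hN1 hN0
  exact ((le_div_iff₀ hN1).2 (le_abelMean_expBump hα h0 hN0 p)).trans_lt hN

theorem tendsto_rpow_mul_of_antitone (hβ : 0 < β) (hβ1 : β ≤ 1) (hα : Antitone α)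
    (h0 : ∀ n, 0 ≤ α n)
    (h : Tendsto (fun z => (1 - z) ^ β * ∑' n, α n * z ^ n) (𝓝[<] 1) (𝓝 C)) :
    Tendsto (fun n : ℕ => (n : ℝ) ^ (1 - β) * α n) atTop (𝓝 (C / Real.Gamma β)) := by
  have hC := nonneg_of_tendsto_mul_tsum h0 h
  have hlim : Tendsto (fun N : ℕ => α N * (1 - Real.exp (-(N : ℝ)⁻¹)) ^ (β - 1)) atTop
      (𝓝 (C / Real.Gamma β)) :=
    tendsto_order.2 ⟨fun a ha => eventually_lt_mul_rpow hβ hβ1 hα h0 hC h ha,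
      fun b hb => eventually_mul_rpow_lt hβ hβ1 hα h0 hC h hb⟩
  have hone := tendsto_mul_one_sub_exp_neg_inv.rpow_const (p := 1 - β) (Or.inl one_ne_zero)
  have hprod := hone.mul hlim
  rw [Real.one_rpow, one_mul] at hprod
  refine hprod.congr' ?_
  filter_upwards [eventually_ne_atTop 0] with N hN
  have hz := sub_pos.2 (exp_neg_inv_mem_Ico hN).2
  rw [Real.mul_rpow N.cast_nonneg hz.le, mul_assoc, mul_left_comm _ (α N), ← Real.rpow_add hz,
    sub_add_sub_cancel', sub_self, Real.rpow_zero, mul_one]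

end TauberianTheorem

section Asymptotics

variable {t L : ℝ} {α : ℕ → ℝ} {k : ℕ}

theorem antitone_survivalProb (k : ℕ) : Antitone (survivalProb k) := antitone_killedOp_pow_one _

theorem antitone_avoidProb (k : ℕ) : Antitone (avoidProb k) := antitone_killedOp_pow_one _

theorem avoidProb_nonneg (k n : ℕ) : 0 ≤ avoidProb k n := killedOp_pow_nonneg (by simp) n _

theorem hasSum_survivalProb_mul_pow (ht : t ∈ Set.Ico 0 1) (k : ℕ) :
    HasSum (fun n => survivalProb k n * t ^ n) (survivalGF t k) := by
  have h : HasSum (fun n => t ^ n * survivalProb k n) (survivalGF t k) :=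
    (summable_survivalGF ht k).hasSum
  simpa only [mul_comm] using h

theorem four_mul_sqrt_two_sub_one_pos : 0 < 4 * (√2 - 1) := by linarith [Real.one_lt_sqrt_two]

theorem tendsto_rpow_mul_survivalGF :
    Tendsto (fun t => (1 - t) ^ (3 / 4 : ℝ) * survivalGF t 0) (𝓝[<] 1) (𝓝 (√(4 * (√2 - 1)))⁻¹) := by
  refine (tendsto_loopGF.sqrt.inv₀ (Real.sqrt_pos.2 four_mul_sqrt_two_sub_one_pos).ne').congr' ?_
  filter_upwards [eventually_mem_Ioo] with t ht using (rpow_mul_survivalGF ht).symm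

theorem tendsto_div_survivalProb_of_antitone (hα : Antitone α) (h0 : ∀ n, 0 ≤ α n)
    (h : Tendsto (fun t => (1 - t) ^ (3 / 4 : ℝ) * ∑' n, α n * t ^ n) (𝓝[<] 1)
      (𝓝 ((√(4 * (√2 - 1)))⁻¹ * L))) :
    Tendsto (fun n => α n / survivalProb 0 n) atTop (𝓝 L) := by
  have hS : Tendsto (fun t => (1 - t) ^ (3 / 4 : ℝ) * ∑' n, survivalProb 0 n * t ^ n) (𝓝[<] 1)
      (𝓝 (√(4 * (√2 - 1)))⁻¹) := by
    refine tendsto_rpow_mul_survivalGF.congr' ?_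
    filter_upwards [eventually_mem_Ioo] with t ht
    rw [(hasSum_survivalProb_mul_pow ⟨ht.1.le, ht.2⟩ 0).tsum_eq]
  have hβ : (0 : ℝ) < 3 / 4 := by norm_num
  have hβ1 : (3 / 4 : ℝ) ≤ 1 := by norm_num
  have hc : (√(4 * (√2 - 1)))⁻¹ ≠ 0 :=
    inv_ne_zero (Real.sqrt_pos.2 four_mul_sqrt_two_sub_one_pos).ne'
  have hΓ := (Real.Gamma_pos_of_pos hβ).ne'
  have hdiv := (tendsto_rpow_mul_of_antitone hβ hβ1 hα h0 h).div
    (tendsto_rpow_mul_of_antitone hβ hβ1 (antitone_survivalProb 0) (survivalProb_nonneg 0) hS)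
    (div_ne_zero hc hΓ)
  rw [div_div_div_cancel_right₀ hΓ, mul_div_cancel_left₀ _ hc] at hdiv
  refine hdiv.congr' ?_
  filter_upwards [eventually_ne_atTop 0] with n hn
  exact mul_div_mul_left _ _ (Real.rpow_pos_of_pos (by positivity) _).ne'

theorem tendsto_survivalProb_div_self :
    Tendsto (fun n => survivalProb 0 n / survivalProb 0 n) atTop (𝓝 1) := by
  refine tendsto_div_survivalProb_of_antitone (antitone_survivalProb 0) (survivalProb_nonneg 0) ?_
  rw [mul_one]
  refine tendsto_rpow_mul_survivalGF.congr' ?_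
  filter_upwards [eventually_mem_Ioo] with t ht
  rw [(hasSum_survivalProb_mul_pow ⟨ht.1.le, ht.2⟩ 0).tsum_eq]

theorem tendsto_axisGF_sSum (k : ℕ) : Tendsto (fun t => axisGF t k) (𝓝[<] 1) (𝓝 (sSum k)) := by
  rw [sSum_eq_invSqrtCoeff]
  exact tendsto_axisGF k

theorem tendsto_sum_axisGF (k : ℕ) :
    Tendsto (fun t => ∑ l ∈ Finset.range k, axisGF t l) (𝓝[<] 1)
      (𝓝 (∑ ℓ ∈ Finset.range k, sSum ℓ)) :=
  tendsto_finsetSum _ fun l _ => tendsto_axisGF_sSum l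

theorem tendsto_sum_axisGF_sq (k : ℕ) :
    Tendsto (fun t => ∑ l ∈ Finset.range k, axisGF t l ^ 2) (𝓝[<] 1)
      (𝓝 (∑ ℓ ∈ Finset.range k, sSum ℓ ^ 2)) :=
  tendsto_finsetSum _ fun l _ => (tendsto_axisGF_sSum l).pow 2

theorem sum_axisGF_sq_pos (t : ℝ) (hk : 1 ≤ k) : 0 < ∑ l ∈ Finset.range k, axisGF t l ^ 2 := by
  refine Finset.sum_pos' (fun _ _ => sq_nonneg _) ⟨0, Finset.mem_range.2 hk, ?_⟩
  simp [axisGF_zero]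

theorem survivalGF_eq (ht : t ∈ Set.Ico 0 1) (hk : 1 ≤ k) :
    survivalGF t k = loopGF t * survivalGF t 0 * ∑ l ∈ Finset.range k, axisGF t l := by
  obtain ⟨j, rfl⟩ := Nat.exists_eq_add_of_le' hk
  exact survivalGF_succ_eq ht j

theorem avoidGF_eq (ht : t ∈ Set.Ico 0 1) (hk : 1 ≤ k) :
    ∑' n, avoidProb k n * t ^ n = survivalGF t 0 * (1 - axisGF t k *
      (∑ l ∈ Finset.range k, axisGF t l) / ∑ l ∈ Finset.range k, axisGF t l ^ 2) := by
  have hL := (loopGF_pos ht).ne'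
  have hQ := (sum_axisGF_sq_pos t hk).ne'
  have h := loopGF_mul_sum_sq_mul_avoidGF ht hk
  rw [survivalGF_eq ht hk] at h
  simp only [mul_comm (avoidProb k _)]
  refine mul_left_cancel₀ (mul_ne_zero hL hQ) (h.trans ?_)
  field_simp

theorem tendsto_avoidProb_div (hk : 1 ≤ k) :
    Tendsto (fun n => avoidProb k n / survivalProb 0 n) atTop (𝓝 (1 - limVisitProb k)) := by
  refine tendsto_div_survivalProb_of_antitone (antitone_avoidProb k) (avoidProb_nonneg k) ?_
  have hlim := ((tendsto_axisGF_sSum k).mul (tendsto_sum_axisGF k)).div (tendsto_sum_axisGF_sq k)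
    (sum_sq_sSum_pos hk).ne'
  refine (tendsto_rpow_mul_survivalGF.mul (hlim.const_sub 1)).congr' ?_
  filter_upwards [eventually_mem_Ioo] with t ht
  rw [avoidGF_eq ⟨ht.1.le, ht.2⟩ hk, mul_assoc]
  rfl

theorem tendsto_visitCount_div (hk : 1 ≤ k) :
    Tendsto (fun n : ℕ => (visitCount k n : ℝ) / slitTotal sqSteps n) atTop
      (𝓝 (limVisitProb k)) := by
  have h := tendsto_survivalProb_div_self.sub (tendsto_avoidProb_div hk)
  rw [sub_sub_cancel] at h
  refine h.congr fun n => ?_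
  rw [visitCount_eq hk, slitTotal_eq, mul_div_mul_left _ _ (by positivity), sub_div]

theorem hasSum_cauchyProduct {f g : ℕ → ℝ} {F G : ℝ} (hf : HasSum (fun n => f n * t ^ n) F)
    (hg : HasSum (fun n => g n * t ^ n) G) :
    HasSum (fun n => (∑ m ∈ Finset.range (n + 1), f m * g (n - m)) * t ^ n) (F * G) := by
  have h := hasSum_sum_range_mul_of_summable_norm hf.summable.norm hg.summable.norm
  rw [hf.tsum_eq, hg.tsum_eq] at h
  refine h.congr_fun fun n => ?_
  rw [Finset.sum_mul]
  refine Finset.sum_congr rfl fun m hm => ?_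
  rw [← pow_mul_pow_sub t (Finset.mem_range_succ_iff.1 hm)]
  ring

/-- The tail `∑_{m > n} axisProb k m` of the series defining `sSum k`. -/
noncomputable def axisTail (k n : ℕ) : ℝ := sSum k - ∑ m ∈ Finset.range (n + 1), axisProb k m

/-- `totalVisits k n / 4ⁿ`, the weighted number of visits to `(k,0)`. -/
noncomputable def visitMass (k n : ℕ) : ℝ :=
  ∑ m ∈ Finset.range (n + 1), axisProb k m * survivalProb k (n - m)

theorem axisTail_succ (k n : ℕ) : axisTail k (n + 1) = axisTail k n - axisProb k (n + 1) := by
  rw [axisTail, axisTail, Finset.sum_range_succ _ (n + 1), sub_add_eq_sub_sub]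

theorem axisTail_nonneg (k n : ℕ) : 0 ≤ axisTail k n := by
  rw [axisTail, sSum_eq_invSqrtCoeff, sub_nonneg]
  exact sum_le_hasSum _ (fun m _ => axisProb_nonneg k m) (hasSum_axisProb k)

theorem antitone_axisTail (k : ℕ) : Antitone (axisTail k) := antitone_nat_of_succ_le fun n => by
  rw [axisTail_succ]
  exact sub_le_self _ (axisProb_nonneg k (n + 1))

theorem hasSum_axisTail_mul_pow (ht : t ∈ Set.Ico 0 1) (k : ℕ) :
    HasSum (fun n => axisTail k n * t ^ n) ((sSum k - axisGF t k) * (1 - t)⁻¹) := by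
  have hgeom : HasSum (fun n => 1 * t ^ n) (1 - t)⁻¹ := by
    simpa only [one_mul] using hasSum_geometric_of_lt_one ht.1 ht.2
  have h := (hgeom.mul_left (sSum k)).sub
    (hasSum_cauchyProduct (hasSum_axisProb_mul_pow ht k) hgeom)
  rw [sub_mul]
  refine h.congr_fun fun n => ?_
  simp only [axisTail, mul_one, one_mul, sub_mul]

theorem tendsto_rpow_mul_axisTail (k : ℕ) :
    Tendsto (fun t => (1 - t) ^ (3 / 4 : ℝ) * ∑' n, axisTail k n * t ^ n) (𝓝[<] 1) (𝓝 0) := by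
  have hcont : ContinuousAt (fun t : ℝ => (1 - t) ^ (1 / 4 : ℝ)) 1 :=
    ContinuousAt.rpow_const (by fun_prop) (Or.inr (by norm_num))
  have hlim : Tendsto (fun t : ℝ => (1 - t) ^ (1 / 4 : ℝ)) (𝓝[<] 1) (𝓝 0) := by
    simpa using hcont.tendsto.mono_left nhdsWithin_le_nhds
  have hbigO := (Asymptotics.isBigO_refl (fun t : ℝ => (1 - t) ^ (3 / 4 : ℝ) * (1 - t)⁻¹)
    (𝓝[<] 1)).mul (isBigO_invSqrtCoeff_sub_axisGF k)
  refine (hbigO.congr' ?_ ?_).trans_tendsto hlim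
  · filter_upwards [eventually_mem_Ioo] with t ht
    rw [(hasSum_axisTail_mul_pow ⟨ht.1.le, ht.2⟩ k).tsum_eq, sSum_eq_invSqrtCoeff]
    ring
  · filter_upwards [eventually_mem_Ioo] with t ht
    have ht1 : 0 < 1 - t := sub_pos.2 ht.2
    rw [Real.sqrt_eq_rpow, ← Real.rpow_neg_one, ← Real.rpow_add ht1, ← Real.rpow_add ht1]
    norm_num

theorem visitMass_succ_le (k n : ℕ) : visitMass k (n + 1) ≤ visitMass k n + axisProb k (n + 1) := by
  rw [visitMass, visitMass, Finset.sum_range_succ _ (n + 1), Nat.sub_self, survivalProb_zero_right,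
    mul_one]
  gcongr with m
  · exact axisProb_nonneg k m
  · exact antitone_survivalProb k (by omega)

/-- The visit masses themselves need not decrease, so the Tauberian theorem is applied after adding
a sequence of smaller order. -/
theorem antitone_visitMass_add_axisTail (k : ℕ) :
    Antitone fun n => visitMass k n + axisTail k n := antitone_nat_of_succ_le fun n => by
  rw [axisTail_succ]
  linarith [visitMass_succ_le k n]

theorem visitMass_nonneg (k n : ℕ) : 0 ≤ visitMass k n :=
  Finset.sum_nonneg fun m _ => mul_nonneg (axisProb_nonneg k m) (survivalProb_nonneg k _)

theorem hasSum_visitMass_mul_pow (ht : t ∈ Set.Ico 0 1) (k : ℕ) :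
    HasSum (fun n => visitMass k n * t ^ n) (axisGF t k * survivalGF t k) :=
  hasSum_cauchyProduct (hasSum_axisProb_mul_pow ht k) (hasSum_survivalProb_mul_pow ht k)

theorem tendsto_rpow_mul_visitMass (hk : 1 ≤ k) :
    Tendsto (fun t => (1 - t) ^ (3 / 4 : ℝ) * ∑' n, visitMass k n * t ^ n) (𝓝[<] 1)
      (𝓝 ((√(4 * (√2 - 1)))⁻¹ * limVisitNum k)) := by
  refine (tendsto_rpow_mul_survivalGF.mul ((tendsto_loopGF.mul (tendsto_axisGF_sSum k)).mul
    (tendsto_sum_axisGF k))).congr' ?_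
  filter_upwards [eventually_mem_Ioo] with t ht
  rw [(hasSum_visitMass_mul_pow ⟨ht.1.le, ht.2⟩ k).tsum_eq, survivalGF_eq ⟨ht.1.le, ht.2⟩ hk]
  ring

theorem tendsto_visitMass_div (hk : 1 ≤ k) :
    Tendsto (fun n => visitMass k n / survivalProb 0 n) atTop (𝓝 (limVisitNum k)) := by
  have htail : Tendsto (fun n => axisTail k n / survivalProb 0 n) atTop (𝓝 0) :=
    tendsto_div_survivalProb_of_antitone (antitone_axisTail k) (axisTail_nonneg k)
      (by simpa only [mul_zero] using tendsto_rpow_mul_axisTail k)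
  have hsum : Tendsto (fun n => (visitMass k n + axisTail k n) / survivalProb 0 n) atTop
      (𝓝 (limVisitNum k)) := by
    refine tendsto_div_survivalProb_of_antitone (antitone_visitMass_add_axisTail k)
      (fun n => add_nonneg (visitMass_nonneg k n) (axisTail_nonneg k n)) ?_
    have h := (tendsto_rpow_mul_visitMass hk).add (tendsto_rpow_mul_axisTail k)
    rw [add_zero] at h
    refine h.congr' ?_
    filter_upwards [eventually_mem_Ioo] with t ht
    have hmass := (hasSum_visitMass_mul_pow ⟨ht.1.le, ht.2⟩ k).summable
    have htail := (hasSum_axisTail_mul_pow ⟨ht.1.le, ht.2⟩ k).summable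
    simp only [add_mul, hmass.tsum_add htail, mul_add]
  have h := hsum.sub htail
  rw [sub_zero] at h
  refine h.congr fun n => ?_
  rw [← sub_div, add_sub_cancel_right]

theorem tendsto_totalVisits_div (hk : 1 ≤ k) :
    Tendsto (fun n : ℕ => (totalVisits k n : ℝ) / slitTotal sqSteps n) atTop
      (𝓝 (limVisitNum k)) := by
  refine (tendsto_visitMass_div hk).congr fun n => ?_
  rw [totalVisits_eq, slitTotal_eq, mul_div_mul_left _ _ (by positivity), visitMass]

end Asymptotics

end SlitPlane

/-- transience of walks on the slit plane.  For `k ≥ 1`, the proportion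
of `n`-step walks on the slit plane visiting `(k,0)` tends to
`p_k = s_k (∑_{ℓ<k} s_ℓ)/(∑_{ℓ<k} s_ℓ²) < 1`, and the average number of visits to
`(k,0)` tends to `v_k = 4(√2−1) s_k ∑_{ℓ<k} s_ℓ`; in particular `p₁ = 2−√2`,
`p₂ = (5/34)(19−11√2)`, `v₁ = 4(3√2−4)`, `v₂ = 10(22√2−31)`. -/
theorem slit_plane_transience (k : ℕ) (hk : 1 ≤ k) :
    (∀ ℓ : ℕ, Summable fun n : ℕ => (slitCount sqSteps ℓ 0 n : ℝ) / 4 ^ n)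
    ∧ Tendsto (fun n : ℕ => (visitCount k n : ℝ) / (slitTotal sqSteps n : ℝ))
        atTop (nhds (limVisitProb k))
    ∧ limVisitProb k < 1
    ∧ Tendsto (fun n : ℕ => (totalVisits k n : ℝ) / (slitTotal sqSteps n : ℝ))
        atTop (nhds (limVisitNum k))
    ∧ limVisitProb 1 = 2 - Real.sqrt 2
    ∧ limVisitProb 2 = 5 / 34 * (19 - 11 * Real.sqrt 2)
    ∧ limVisitNum 1 = 4 * (3 * Real.sqrt 2 - 4)
    ∧ limVisitNum 2 = 10 * (22 * Real.sqrt 2 - 31) :=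
  ⟨fun ℓ => by simpa only [SlitPlane.slitCount_div_eq_axisProb] using SlitPlane.summable_axisProb ℓ,
   SlitPlane.tendsto_visitCount_div hk, SlitPlane.limVisitProb_lt_one hk,
   SlitPlane.tendsto_totalVisits_div hk, SlitPlane.limVisitProb_one, SlitPlane.limVisitProb_two,
   SlitPlane.limVisitNum_one, SlitPlane.limVisitNum_two⟩
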